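/- Let u be a weak solution in B₁ and let x₀ ∈ ∂{u > 0} ∩ B₁. Suppose there is an open ball B = B_s(z) ⊆ B₁ with B ⊆ {u = 0} and x₀ ∈ ∂B (a ball in the zero set touching the free boundary at x₀). Then limsup_{x → x₀, u(x) > 0} u(x)/dist(x, B) ≥ Q(x₀); that is, for every ε > 0 and every ρ > 0 there exists x ∈ B_ρ(x₀) with u(x) > 0 and u(x) ≥ (Q(x₀) − ε) · dist(x, B). -/

import Mathlib

open MeasureTheory Metric Set Filter
open scoped ENNReal RealInnerProductSpace Topology NNReal

noncomputable section

variable {n : ℕ}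

/-- The Laplacian of `u : ℝⁿ → ℝ`, written with iterated directional derivatives. -/
def lap (u : EuclideanSpace ℝ (Fin n) → ℝ) (x : EuclideanSpace ℝ (Fin n)) : ℝ :=
  ∑ i : Fin n, fderiv ℝ (fun y => fderiv ℝ u y (EuclideanSpace.single i 1)) x
    (EuclideanSpace.single i 1)

/-- The positivity set `{u > 0}` of `u`, within the open unit ball `B₁`. -/
def posSet (u : EuclideanSpace ℝ (Fin n) → ℝ) : Set (EuclideanSpace ℝ (Fin n)) :=
  {x | x ∈ ball (0 : EuclideanSpace ℝ (Fin n)) 1 ∧ 0 < u x}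

/-- `U` coincides, inside some small ball around `z`, with the open region above the graph of an
`L`-Lipschitz function `φ` (vanishing at the origin) in some rotated coordinate frame. -/
def IsLipGraphNear (U : Set (EuclideanSpace ℝ (Fin n))) (z : EuclideanSpace ℝ (Fin n)) : Prop :=
  ∃ (r L : ℝ)
    (e : WithLp 2 (EuclideanSpace ℝ (Fin (n-1)) × ℝ) ≃ₗᵢ[ℝ] EuclideanSpace ℝ (Fin n))
    (φ : EuclideanSpace ℝ (Fin (n-1)) → ℝ),
    0 < r ∧ 0 < L ∧ LipschitzWith (Real.toNNReal L) φ ∧ φ 0 = 0 ∧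
    U ∩ ball z r =
      {p | ∃ y t, φ y < t ∧
        p = z + e ((WithLp.equiv 2 (EuclideanSpace ℝ (Fin (n-1)) × ℝ)).symm (y, t))} ∩ ball z r

/-- A bounded Lipschitz domain of `ℝⁿ`. -/
def IsLipschitzDomain (Ω : Set (EuclideanSpace ℝ (Fin n))) : Prop :=
  Bornology.IsBounded Ω ∧ IsOpen Ω ∧ IsConnected Ω ∧ ∀ x ∈ frontier Ω, IsLipGraphNear Ω x

/-- Near `z`, the set `S` is the graph of a `C^∞` function `ψ` (vanishing at the origin) in some
rotated coordinate frame: `S` is a smooth hypersurface near `z`. -/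
def IsSmoothGraphNear (S : Set (EuclideanSpace ℝ (Fin n))) (z : EuclideanSpace ℝ (Fin n)) : Prop :=
  ∃ (ρ : ℝ)
    (e : WithLp 2 (EuclideanSpace ℝ (Fin (n-1)) × ℝ) ≃ₗᵢ[ℝ] EuclideanSpace ℝ (Fin n))
    (ψ : EuclideanSpace ℝ (Fin (n-1)) → ℝ),
    0 < ρ ∧ ContDiff ℝ (⊤ : ℕ∞) ψ ∧ ψ 0 = 0 ∧
    S ∩ ball z ρ =
      {p | ∃ y t, t = ψ y ∧
        p = z + e ((WithLp.equiv 2 (EuclideanSpace ℝ (Fin (n-1)) × ℝ)).symm (y, t))} ∩ ball z ρ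

/-- `g` is the weak gradient of `u` on the set `s`. -/
def HasWeakGradOn (u : EuclideanSpace ℝ (Fin n) → ℝ)
    (g : EuclideanSpace ℝ (Fin n) → EuclideanSpace ℝ (Fin n))
    (s : Set (EuclideanSpace ℝ (Fin n))) : Prop :=
  ∀ η : EuclideanSpace ℝ (Fin n) → ℝ, ContDiff ℝ (⊤ : ℕ∞) η → HasCompactSupport η → tsupport η ⊆ s →
    ∀ v : EuclideanSpace ℝ (Fin n),
      ∫ x in s, u x * fderiv ℝ η x v = -∫ x in s, ⟪g x, v⟫ * η x

/-- `u` is a weak solution of the Alt–Caffarelli type problem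
`Δu = -f` in `{u>0} ∩ B₁`, `∂_ν u = Q` on `∂{u>0} ∩ B₁` (Definition 2.1). -/
structure IsWeakSolution (f Q u : EuclideanSpace ℝ (Fin n) → ℝ) : Prop where
  contOn : ContinuousOn u (ball 0 1)
  nonneg : ∀ x ∈ ball (0 : EuclideanSpace ℝ (Fin n)) 1, 0 ≤ u x
  c2 : ContDiffOn ℝ 2 u (posSet u)
  eqn : ∀ x ∈ posSet u, lap u x = - f x
  nondeg : ∀ D : Set (EuclideanSpace ℝ (Fin n)), IsOpen D →
    closure D ⊆ ball (0 : EuclideanSpace ℝ (Fin n)) 1 →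
    ∃ c C : ℝ, 0 < c ∧ c ≤ C ∧ ∀ x r, 0 < r → ball x r ⊆ D → x ∈ frontier (posSet u) →
      c ≤ (1/r) * ⨍ y in sphere x r, u y ∂(μH[(n-1:ℝ)]) ∧
      (1/r) * ⨍ y in sphere x r, u y ∂(μH[(n-1:ℝ)]) ≤ C
  locLip : ∀ K : Set (EuclideanSpace ℝ (Fin n)), IsCompact K →
    K ⊆ ball (0 : EuclideanSpace ℝ (Fin n)) 1 → ∃ L : ℝ≥0, LipschitzOnWith L u K
  weakEq : ∀ η : EuclideanSpace ℝ (Fin n) → ℝ, ContDiff ℝ (⊤ : ℕ∞) η → HasCompactSupport η →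
    tsupport η ⊆ ball (0 : EuclideanSpace ℝ (Fin n)) 1 →
    -∫ x in ball (0 : EuclideanSpace ℝ (Fin n)) 1, ⟪gradient u x, gradient η x⟫
      = ∫ x in frontier (posSet u) ∩ ball (0 : EuclideanSpace ℝ (Fin n)) 1,
          Q x * η x ∂(μH[(n-1:ℝ)])
        - ∫ x in posSet u, f x * η x

/-!
Suppose that the slope of `u` against the distance to the touching ball were eventually at most
some `a < Q x₀`, and let `ℓ ≤ a` be its limsup at `x₀`, which is positive by nondegeneracy. Choose
`y` near `x₀` at which the slope nearly attains `ℓ`, and let `h` be the distance from `y` to the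
ball. At scale `h` the ball looks like a half-space, and `u` lies below the affine function of
slope `ℓ + σ` vanishing on its boundary, almost touching it at `y`.

Test the equation with the radial function `η = (|x - y|² / h² + σ²) ^ (-p) - (1 + λ²) ^ (-p)`,
truncated at zero and smoothed, where `p = n / 2 - 3 / 4 > n / 2 - 1`. Away from a core of radius
`O(σ h)` it is subharmonic, so up to `O(√σ h ^ (n - 1))` the integral `∫ u Δη` is at most the one
of the affine function, which is `ℓ + σ` times the integral of `η` over the hyperplane bounding
the half-space. Every line orthogonal to this hyperplane and close to `y` meets the free boundary
between the zero set and the neighbourhood of `y` where `u > 0`, at a point that is closer to `y`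
than the hyperplane is. Since projections do not increase Hausdorff measure, `∫ Q η` over the free
boundary is therefore at least `Q x₀ - o(1)` times the same integral over the hyperplane. The weak
equation then gives `Q x₀ - ℓ ≤ 0` in the limit `h → 0`, `σ → 0`.
-/

/-! ### The Laplacian of compositions and of test functions -/

section Laplacian

variable {η ζ F : EuclideanSpace ℝ (Fin n) → ℝ} {x : EuclideanSpace ℝ (Fin n)}

lemma inner_gradient_eq_sum (u v : EuclideanSpace ℝ (Fin n) → ℝ) (x : EuclideanSpace ℝ (Fin n)) :
    ⟪gradient u x, gradient v x⟫ = ∑ i, fderiv ℝ u x (EuclideanSpace.single i 1) *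
      fderiv ℝ v x (EuclideanSpace.single i 1) := by
  simp only [← inner_gradient_left, PiLp.inner_apply]
  simp [mul_comm]

lemma contDiff_fderiv_apply (hη : ContDiff ℝ (⊤ : ℕ∞) η) (v : EuclideanSpace ℝ (Fin n)) :
    ContDiff ℝ (⊤ : ℕ∞) fun x ↦ fderiv ℝ η x v :=
  (hη.fderiv_right (m := (⊤ : ℕ∞)) (by simp)).clm_apply contDiff_const

lemma differentiable_fderiv_apply (hη : ContDiff ℝ (⊤ : ℕ∞) η) (v : EuclideanSpace ℝ (Fin n)) :
    Differentiable ℝ fun x ↦ fderiv ℝ η x v :=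
  (contDiff_fderiv_apply hη v).differentiable (by simp)

lemma lap_comp {g g' : ℝ → ℝ} {g'' : ℝ} (hF : ContDiff ℝ (⊤ : ℕ∞) F)
    (hg : ∀ᶠ t in 𝓝 (F x), HasDerivAt g (g' t) t) (hg' : HasDerivAt g' g'' (F x)) :
    lap (fun y ↦ g (F y)) x = g'' * ‖gradient F x‖ ^ 2 + g' (F x) * lap F x := by
  have hF1 (y) : HasFDerivAt F (fderiv ℝ F y) y :=
    (hF.differentiable (by simp) y).hasFDerivAt
  have first (v) : (fun y ↦ fderiv ℝ (fun y ↦ g (F y)) y v) =ᶠ[𝓝 x]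
      fun y ↦ g' (F y) * fderiv ℝ F y v := by
    filter_upwards [(hF.continuous.tendsto x).eventually hg] with y hy
    have := (hy.comp_hasFDerivAt y (hF1 y)).fderiv
    simp only [Function.comp_def] at this
    simp [this]
  have second (v) : fderiv ℝ (fun y ↦ fderiv ℝ (fun y ↦ g (F y)) y v) x v =
      g'' * (fderiv ℝ F x v * fderiv ℝ F x v) +
        g' (F x) * fderiv ℝ (fun y ↦ fderiv ℝ F y v) x v := by
    have := ((hg'.comp_hasFDerivAt x (hF1 x)).mul
      (differentiable_fderiv_apply hF v x).hasFDerivAt).fderiv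
    simp only [Pi.mul_def, Function.comp_def] at this
    rw [(first v).fderiv_eq, this]
    simp
    ring
  simp only [lap, second, Finset.sum_add_distrib, ← Finset.mul_sum, ← inner_gradient_eq_sum,
    real_inner_self_eq_norm_sq]

lemma lap_add_const_mul (hη : ContDiff ℝ (⊤ : ℕ∞) η) (hζ : ContDiff ℝ (⊤ : ℕ∞) ζ) (t : ℝ)
    (x : EuclideanSpace ℝ (Fin n)) :
    lap (fun x ↦ ζ x + t * η x) x = lap ζ x + t * lap η x := by
  have first (y v) : fderiv ℝ (fun x ↦ ζ x + t * η x) y v =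
      fderiv ℝ ζ y v + t * fderiv ℝ η y v := by
    rw [fderiv_fun_add (hζ.differentiable (by simp) y)
      ((hη.differentiable (by simp) y).const_mul t),
      fderiv_const_mul (hη.differentiable (by simp) y)]
    simp
  simp only [lap, first, Finset.mul_sum, ← Finset.sum_add_distrib]
  refine Finset.sum_congr rfl fun i _ ↦ ?_
  rw [fderiv_fun_add (differentiable_fderiv_apply hζ _ x)
    ((differentiable_fderiv_apply hη _ x).const_mul t),
    fderiv_const_mul (differentiable_fderiv_apply hη _ x)]
  simp

lemma continuous_lap (hη : ContDiff ℝ (⊤ : ℕ∞) η) : Continuous (lap η) :=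
  continuous_finsetSum _ fun _ _ ↦
    (contDiff_fderiv_apply (contDiff_fderiv_apply hη _) _).continuous

lemma fderiv_eq_zero_of_notMem_tsupport (hx : x ∉ tsupport η) : fderiv ℝ η x = 0 :=
  Function.notMem_support.1 fun h ↦ hx (support_fderiv_subset ℝ h)

lemma lap_eq_zero_of_notMem_tsupport (hx : x ∉ tsupport η) : lap η x = 0 := by
  have h : fderiv ℝ η =ᶠ[𝓝 x] 0 :=
    ((isClosed_tsupport η).isOpen_compl.eventually_mem hx).mono fun _ ↦
      fderiv_eq_zero_of_notMem_tsupport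
  refine Finset.sum_eq_zero fun i _ ↦ ?_
  have : (fun y ↦ fderiv ℝ η y (EuclideanSpace.single i 1)) =ᶠ[𝓝 x] fun _ ↦ 0 :=
    h.mono fun y hy ↦ by simp [hy]
  simp [this.fderiv_eq]

lemma hasCompactSupport_fderiv_apply (hc : HasCompactSupport η) (v : EuclideanSpace ℝ (Fin n)) :
    HasCompactSupport fun x ↦ fderiv ℝ η x v :=
  (hc.fderiv (𝕜 := ℝ)).comp_left (g := fun T : _ →L[ℝ] ℝ ↦ T v) (by simp)

/-- A smooth function whose support is a compact subset of `U`. -/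
structure IsTestFunction (U : Set (EuclideanSpace ℝ (Fin n)))
    (η : EuclideanSpace ℝ (Fin n) → ℝ) : Prop where
  contDiff : ContDiff ℝ (⊤ : ℕ∞) η
  hasCompactSupport : HasCompactSupport η
  tsupport_subset : tsupport η ⊆ U

lemma IsTestFunction.add_const_mul {U : Set (EuclideanSpace ℝ (Fin n))} (hζ : IsTestFunction U ζ)
    (hη : IsTestFunction U η) (t : ℝ) : IsTestFunction U fun x ↦ ζ x + t * η x where
  contDiff := hζ.contDiff.add (contDiff_const.mul hη.contDiff)
  hasCompactSupport := hζ.hasCompactSupport.add hη.hasCompactSupport.mul_left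
  tsupport_subset := (tsupport_add _ _).trans <| union_subset hζ.tsupport_subset <|
    (closure_mono (Function.support_mul_subset_right _ _)).trans hη.tsupport_subset

lemma IsTestFunction.continuous_mul {U : Set (EuclideanSpace ℝ (Fin n))} (hU : IsOpen U)
    (hη : IsTestFunction U η) {u w : EuclideanSpace ℝ (Fin n) → ℝ} (hu : ContinuousOn u U)
    (hw : Continuous w) (hwη : ∀ x ∉ tsupport η, w x = 0) : Continuous fun x ↦ u x * w x := by
  refine continuous_iff_continuousAt.2 fun x ↦ ?_
  by_cases hx : x ∈ tsupport η
  · exact (hu.continuousAt (hU.mem_nhds (hη.tsupport_subset hx))).mul hw.continuousAt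
  · refine continuousAt_const.congr (f := fun _ ↦ (0 : ℝ)) ?_
    filter_upwards [(isClosed_tsupport η).isOpen_compl.mem_nhds hx] with y hy
    rw [hwη y hy, mul_zero]

lemma IsTestFunction.integrable_mul_lap {U : Set (EuclideanSpace ℝ (Fin n))} (hU : IsOpen U)
    (hη : IsTestFunction U η) {u : EuclideanSpace ℝ (Fin n) → ℝ} (hu : ContinuousOn u U) :
    Integrable fun x ↦ u x * lap η x :=
  (hη.continuous_mul hU hu (continuous_lap hη.contDiff)
    fun _ ↦ lap_eq_zero_of_notMem_tsupport).integrable_of_hasCompactSupport <|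
    HasCompactSupport.intro hη.hasCompactSupport fun x hx ↦ by
      rw [lap_eq_zero_of_notMem_tsupport hx, mul_zero]

end Laplacian

/-! ### Integration by parts -/

section IntegrationByParts

variable {η : EuclideanSpace ℝ (Fin n) → ℝ} {L : ℝ≥0}

lemma integral_mul_fderiv_fderiv {U : EuclideanSpace ℝ (Fin n) → ℝ} (hU : LipschitzWith L U)
    (hη : ContDiff ℝ (⊤ : ℕ∞) η) (hc : HasCompactSupport η) (v : EuclideanSpace ℝ (Fin n)) :
    ∫ x, U x * fderiv ℝ (fun y ↦ fderiv ℝ η y v) x v =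
      -∫ x, fderiv ℝ U x v * fderiv ℝ η x v := by
  have hηv := contDiff_fderiv_apply hη v
  have hcv := hasCompactSupport_fderiv_apply hc v
  obtain ⟨D, hD⟩ := hηv.lipschitzWith_of_hasCompactSupport hcv (by simp)
  have h := hU.integral_lineDeriv_mul_eq (μ := volume) (v := v) hD hcv
  have hU' : ∫ x, lineDeriv ℝ U x v * fderiv ℝ η x v = ∫ x, fderiv ℝ U x v * fderiv ℝ η x v :=
    integral_congr_ae <| hU.ae_differentiableAt.mono fun x hx ↦ by
      simp only [hx.lineDeriv_eq_fderiv]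
  rw [← hU', h, ← integral_neg]
  refine integral_congr_ae (.of_forall fun x ↦ ?_)
  simp [(differentiable_fderiv_apply hη v x).lineDeriv_eq_fderiv, mul_comm]

lemma integral_mul_lap {U : EuclideanSpace ℝ (Fin n) → ℝ} (hU : LipschitzWith L U)
    (hη : ContDiff ℝ (⊤ : ℕ∞) η) (hc : HasCompactSupport η) :
    ∫ x, U x * lap η x = -∫ x, ⟪gradient U x, gradient η x⟫ := by
  have hleft (v : EuclideanSpace ℝ (Fin n)) :
      Integrable fun x ↦ U x * fderiv ℝ (fun y ↦ fderiv ℝ η y v) x v :=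
    (hU.continuous.mul (contDiff_fderiv_apply (contDiff_fderiv_apply hη v) v).continuous)
      |>.integrable_of_hasCompactSupport
        (hasCompactSupport_fderiv_apply (hasCompactSupport_fderiv_apply hc v) v).mul_left
  have hright (v : EuclideanSpace ℝ (Fin n)) :
      Integrable fun x ↦ fderiv ℝ U x v * fderiv ℝ η x v := by
    refine ((hU.locallyIntegrable_lineDeriv v).integrable_smul_right_of_hasCompactSupport
      (contDiff_fderiv_apply hη v).continuous (hasCompactSupport_fderiv_apply hc v)).congr ?_
    filter_upwards [hU.ae_differentiableAt] with x hx
    simp [hx.lineDeriv_eq_fderiv]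
  simp only [lap, Finset.mul_sum, inner_gradient_eq_sum]
  rw [integral_finsetSum _ fun i _ ↦ hleft _, integral_finsetSum _ fun i _ ↦ hright _,
    ← Finset.sum_neg_distrib]
  exact Finset.sum_congr rfl fun i _ ↦ integral_mul_fderiv_fderiv hU hη hc _

lemma integral_mul_lap_of_locallyLipschitz {u : EuclideanSpace ℝ (Fin n) → ℝ}
    {U : Set (EuclideanSpace ℝ (Fin n))} (hU : IsOpen U) (hη : IsTestFunction U η)
    (hu : ∀ K, IsCompact K → K ⊆ U → ∃ L : ℝ≥0, LipschitzOnWith L u K) :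
    ∫ x, u x * lap η x = -∫ x in U, ⟪gradient u x, gradient η x⟫ := by
  obtain ⟨δ, hδ, hδU⟩ :=
    hη.hasCompactSupport.isCompact.exists_cthickening_subset_open hU hη.tsupport_subset
  obtain ⟨L, hL⟩ := hu _ hη.hasCompactSupport.isCompact.cthickening hδU
  obtain ⟨v, hv, huv⟩ := hL.extend_real
  have near (x) (hx : x ∈ tsupport η) : u =ᶠ[𝓝 x] v :=
    (isOpen_thickening.eventually_mem (self_subset_thickening hδ _ hx)).mono fun y hy ↦
      huv (thickening_subset_cthickening _ _ hy)
  have grad_eq_zero (x) (hx : x ∉ tsupport η) : gradient η x = 0 := by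
    simp [gradient, fderiv_eq_zero_of_notMem_tsupport hx]
  calc ∫ x, u x * lap η x
      = ∫ x, v x * lap η x := by
        refine integral_congr_ae (.of_forall fun x ↦ ?_)
        by_cases hx : x ∈ tsupport η
        · simp only [(near x hx).eq_of_nhds]
        · simp only [lap_eq_zero_of_notMem_tsupport hx, mul_zero]
    _ = -∫ x, ⟪gradient v x, gradient η x⟫ :=
        integral_mul_lap hv hη.contDiff hη.hasCompactSupport
    _ = -∫ x, ⟪gradient u x, gradient η x⟫ := by
        congr 1
        refine integral_congr_ae (.of_forall fun x ↦ ?_)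
        by_cases hx : x ∈ tsupport η
        · simp only [(near x hx).gradient_eq]
        · simp only [grad_eq_zero x hx, inner_zero_right]
    _ = -∫ x in U, ⟪gradient u x, gradient η x⟫ := by
        rw [setIntegral_eq_integral_of_forall_compl_eq_zero fun x hx ↦ ?_]
        rw [grad_eq_zero x fun h ↦ hx (hη.tsupport_subset h), inner_zero_right]

lemma IsWeakSolution.integral_mul_lap {f Q u : EuclideanSpace ℝ (Fin n) → ℝ}
    (hu : IsWeakSolution f Q u) (hη : IsTestFunction (ball 0 1) η) :
    ∫ x, u x * lap η x = ∫ x in frontier (posSet u) ∩ ball 0 1, Q x * η x ∂(μH[(n-1:ℝ)]) -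
      ∫ x in posSet u, f x * η x := by
  rw [integral_mul_lap_of_locallyLipschitz isOpen_ball hη hu.locLip,
    hu.weakEq η hη.contDiff hη.hasCompactSupport hη.tsupport_subset]

end IntegrationByParts

/-! ### Radial barriers -/

/-- The smooth convex regularization `v ↦ ∫₀ᵛ smoothTransition` of the positive part, used to cut
off subharmonic functions without destroying subharmonicity. -/
def smoothRamp (v : ℝ) : ℝ := ∫ t in (0 : ℝ)..v, Real.smoothTransition t

lemma hasDerivAt_smoothRamp (v : ℝ) : HasDerivAt smoothRamp (Real.smoothTransition v) v :=
  (Real.smoothTransition.continuous.integral_hasStrictDerivAt 0 v).hasDerivAt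

lemma contDiff_smoothRamp : ContDiff ℝ (⊤ : ℕ∞) smoothRamp := by
  refine contDiff_infty_iff_deriv.2 ⟨fun v ↦ (hasDerivAt_smoothRamp v).differentiableAt, ?_⟩
  rw [funext fun v ↦ (hasDerivAt_smoothRamp v).deriv]
  exact Real.smoothTransition.contDiff

lemma smoothRamp_mono : Monotone smoothRamp :=
  monotone_of_hasDerivAt_nonneg hasDerivAt_smoothRamp fun v ↦ Real.smoothTransition.nonneg v

lemma smoothRamp_of_nonpos {v : ℝ} (hv : v ≤ 0) : smoothRamp v = 0 := by
  rw [smoothRamp, intervalIntegral.integral_congr (g := fun _ ↦ 0) fun t ht ↦ ?_]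
  · simp
  · rw [uIcc_of_ge hv] at ht
    exact Real.smoothTransition.zero_of_nonpos ht.2

lemma smoothRamp_pos_iff {v : ℝ} : 0 < smoothRamp v ↔ 0 < v := by
  refine ⟨fun h ↦ not_le.1 fun hv ↦ h.ne' (smoothRamp_of_nonpos hv), fun hv ↦ ?_⟩
  exact intervalIntegral.intervalIntegral_pos_of_pos_on
    (Real.smoothTransition.continuous.intervalIntegrable _ _)
    (fun t ht ↦ Real.smoothTransition.pos_of_pos ht.1) hv

lemma smoothRamp_nonneg (v : ℝ) : 0 ≤ smoothRamp v :=
  (le_total v 0).elim (fun h ↦ (smoothRamp_of_nonpos h).ge) fun h ↦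
    (smoothRamp_of_nonpos le_rfl).symm.trans_le (smoothRamp_mono h)

lemma smoothTransition_mul_lap_le_lap_smoothRamp {F : EuclideanSpace ℝ (Fin n) → ℝ}
    (hF : ContDiff ℝ (⊤ : ℕ∞) F) (c : ℝ) (x : EuclideanSpace ℝ (Fin n)) :
    Real.smoothTransition (F x - c) * lap F x ≤ lap (fun y ↦ smoothRamp (F y - c)) x := by
  have hg (t : ℝ) : HasDerivAt (fun t ↦ smoothRamp (t - c)) (Real.smoothTransition (t - c)) t :=
    (hasDerivAt_smoothRamp _).comp_sub_const t c
  have hg' : HasDerivAt (fun t ↦ Real.smoothTransition (t - c))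
      (deriv Real.smoothTransition (F x - c)) (F x) :=
    ((Real.smoothTransition.contDiff (n := 1)).differentiable (by simp) _).hasDerivAt.comp_sub_const
      (F x) c
  rw [lap_comp hF (.of_forall hg) hg']
  exact le_add_of_nonneg_left <|
    mul_nonneg Real.smoothTransition.monotone.deriv_nonneg (sq_nonneg _)

section RegularizedPower

variable {p a h : ℝ} {x y : EuclideanSpace ℝ (Fin n)}

/-- The power `(‖x - y‖ / h) ^ (-2 * p)` made smooth at its pole `y` by adding `a` to the squared
distance. -/
def regularizedPower (p a h : ℝ) (y x : EuclideanSpace ℝ (Fin n)) : ℝ :=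
  (‖x - y‖ ^ 2 / h ^ 2 + a) ^ (-p)

lemma contDiff_regularizedPower (ha : 0 < a) : ContDiff ℝ (⊤ : ℕ∞) (regularizedPower p a h y) :=
  ((((contDiff_id.sub contDiff_const).norm_sq ℝ).div_const _).add contDiff_const).rpow_const_of_ne
    fun x ↦ by positivity

lemma hasFDerivAt_norm_sub_sq_div (y x : EuclideanSpace ℝ (Fin n)) :
    HasFDerivAt (fun x ↦ ‖x - y‖ ^ 2 / h ^ 2 + a) ((2 / h ^ 2) • innerSL ℝ (x - y)) x := by
  have := (((hasFDerivAt_id x).sub_const y).norm_sq.mul_const (h ^ 2)⁻¹).add_const a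
  refine this.congr_fderiv ?_
  ext v
  simp [div_eq_inv_mul, mul_assoc]

lemma gradient_norm_sub_sq_div :
    gradient (fun x ↦ ‖x - y‖ ^ 2 / h ^ 2 + a) x = (2 / h ^ 2) • (x - y) := by
  refine ext_inner_right ℝ fun v ↦ ?_
  rw [inner_gradient_left, (hasFDerivAt_norm_sub_sq_div y x).fderiv, real_inner_smul_left]
  rfl

lemma lap_norm_sub_sq_div :
    lap (fun x ↦ ‖x - y‖ ^ 2 / h ^ 2 + a) x = 2 * n / h ^ 2 := by
  have second (v : EuclideanSpace ℝ (Fin n)) :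
      HasFDerivAt (fun x ↦ 2 / h ^ 2 * ⟪x - y, v⟫) ((2 / h ^ 2) • innerSL ℝ v) x := by
    simp_rw [real_inner_comm v]
    exact ((innerSL ℝ v).hasFDerivAt.comp x ((hasFDerivAt_id x).sub_const y)).const_mul _
  simp only [lap, (hasFDerivAt_norm_sub_sq_div _ _).fderiv, smul_apply,
    innerSL_apply_apply, smul_eq_mul, (second _).fderiv]
  simp
  ring

lemma lap_regularizedPower (ha : 0 < a) :
    lap (regularizedPower p a h y) x =
      2 * p / h ^ 2 * (‖x - y‖ ^ 2 / h ^ 2 + a) ^ (-p - 2) *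
        (2 * (p + 1) * (‖x - y‖ ^ 2 / h ^ 2) - n * (‖x - y‖ ^ 2 / h ^ 2 + a)) := by
  set t := ‖x - y‖ ^ 2 / h ^ 2 with ht
  have hta : 0 < t + a := by positivity
  have hF : ContDiff ℝ (⊤ : ℕ∞) fun x ↦ ‖x - y‖ ^ 2 / h ^ 2 + a :=
    (((contDiff_id.sub contDiff_const).norm_sq ℝ).div_const _).add contDiff_const
  have hg : ∀ᶠ r in 𝓝 (t + a), HasDerivAt (fun r : ℝ ↦ r ^ (-p)) (-p * r ^ (-p - 1)) r :=
    (eventually_ne_nhds hta.ne').mono fun r hr ↦ Real.hasDerivAt_rpow_const (.inl hr)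
  have hg' := (Real.hasDerivAt_rpow_const (p := -p - 1) (.inl hta.ne')).const_mul (-p)
  have hlap := lap_comp hF hg hg'
  rw [lap_norm_sub_sq_div, gradient_norm_sub_sq_div, norm_smul, mul_pow, Real.norm_eq_abs,
    sq_abs] at hlap
  refine hlap.trans ?_
  rw [show -p - 1 - 1 = -p - 2 by ring, show -p - 1 = -p - 2 + 1 by ring,
    Real.rpow_add_one hta.ne', ht]
  ring

end RegularizedPower

section Barrier

variable {a R h : ℝ} {x y : EuclideanSpace ℝ (Fin n)}

/-- An exponent slightly larger than the exponent `n / 2 - 1` of the fundamental solution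
`(‖x‖ ^ 2) ^ (1 - n / 2)`, so that regularized powers are subharmonic off a small core. -/
def barrierExponent (n : ℕ) : ℝ := n / 2 - 3 / 4

/-- A smooth radial bump around `y` at scale `h`, supported where `‖x - y‖² / h² + a ≤ R` and
strictly subharmonic there off the core `‖x - y‖² / h² ≤ 2na`. -/
def barrier (a R h : ℝ) (y x : EuclideanSpace ℝ (Fin n)) : ℝ :=
  smoothRamp (regularizedPower (barrierExponent n) a h y x - R ^ (-barrierExponent n))

lemma barrierExponent_pos (hn : 2 ≤ n) : 0 < barrierExponent n := by
  have : (2 : ℝ) ≤ n := by exact_mod_cast hn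
  unfold barrierExponent
  linarith

lemma contDiff_barrier (ha : 0 < a) : ContDiff ℝ (⊤ : ℕ∞) (barrier a R h y) :=
  contDiff_smoothRamp.comp ((contDiff_regularizedPower ha).sub contDiff_const)

lemma barrier_nonneg : 0 ≤ barrier a R h y x := smoothRamp_nonneg _

lemma barrier_pos_iff (hn : 2 ≤ n) (ha : 0 < a) (hR : 0 < R) :
    0 < barrier a R h y x ↔ ‖x - y‖ ^ 2 / h ^ 2 + a < R := by
  rw [barrier, smoothRamp_pos_iff, sub_pos, regularizedPower,
    Real.rpow_lt_rpow_iff_of_neg hR (by positivity) (neg_neg_of_pos (barrierExponent_pos hn))]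

lemma barrier_le_barrier (hn : 2 ≤ n) {a' h' : ℝ} {x' y' : EuclideanSpace ℝ (Fin n)}
    (ha' : 0 < a') (hle : ‖x' - y'‖ ^ 2 / h' ^ 2 + a' ≤ ‖x - y‖ ^ 2 / h ^ 2 + a) :
    barrier a R h y x ≤ barrier a' R h' y' x' := by
  refine smoothRamp_mono (sub_le_sub_right ?_ _)
  exact Real.rpow_le_rpow_of_nonpos (by positivity) hle (neg_nonpos.2 (barrierExponent_pos hn).le)

lemma tsupport_barrier_subset (hn : 2 ≤ n) (ha : 0 < a) (hh : 0 < h) {r : ℝ} (hr : 0 < r)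
    (hR : 0 < R) (hRr : R - a ≤ r ^ 2) : tsupport (barrier a R h y) ⊆ closedBall y (r * h) := by
  refine closure_minimal (fun x hx ↦ ?_) isClosed_closedBall
  have h1 := (barrier_pos_iff hn ha hR).1 (barrier_nonneg.lt_of_ne' hx)
  have h2 : ‖x - y‖ ^ 2 < (r * h) ^ 2 := by
    rw [mul_pow, ← div_lt_iff₀ (by positivity)]
    linarith
  rw [mem_closedBall, dist_eq_norm]
  exact (lt_of_pow_lt_pow_left₀ 2 (by positivity) h2).le

lemma isTestFunction_barrier (hn : 2 ≤ n) (ha : 0 < a) (hh : 0 < h) {r : ℝ} (hr : 0 < r)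
    (hR : 0 < R) (hRr : R - a ≤ r ^ 2) {U : Set (EuclideanSpace ℝ (Fin n))}
    (hU : closedBall y (r * h) ⊆ U) : IsTestFunction U (barrier a R h y) where
  contDiff := contDiff_barrier ha
  hasCompactSupport := (isCompact_closedBall y (r * h)).of_isClosed_subset (isClosed_tsupport _)
    (tsupport_barrier_subset hn ha hh hr hR hRr)
  tsupport_subset := (tsupport_barrier_subset hn ha hh hr hR hRr).trans hU

lemma smoothTransition_mul_lap_le_lap_barrier (ha : 0 < a) :
    Real.smoothTransition
        (regularizedPower (barrierExponent n) a h y x - R ^ (-barrierExponent n)) *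
      (2 * barrierExponent n / h ^ 2 *
        (‖x - y‖ ^ 2 / h ^ 2 + a) ^ (-barrierExponent n - 2) *
        (‖x - y‖ ^ 2 / h ^ 2 / 2 - n * a)) ≤ lap (barrier a R h y) x := by
  refine le_trans (le_of_eq ?_)
    (smoothTransition_mul_lap_le_lap_smoothRamp (contDiff_regularizedPower ha) _ x)
  rw [lap_regularizedPower ha]
  congr 2
  rw [barrierExponent]
  ring

lemma lap_barrier_nonneg (hn : 2 ≤ n) (ha : 0 < a) (hx : 2 * n * a ≤ ‖x - y‖ ^ 2 / h ^ 2) :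
    0 ≤ lap (barrier a R h y) x := by
  refine le_trans ?_ (smoothTransition_mul_lap_le_lap_barrier ha)
  have := barrierExponent_pos hn
  have := sub_nonneg.2 (by linarith : n * a ≤ ‖x - y‖ ^ 2 / h ^ 2 / 2)
  have := Real.smoothTransition.nonneg
    (regularizedPower (barrierExponent n) a h y x - R ^ (-barrierExponent n))
  positivity

lemma lap_barrier_pos (hn : 2 ≤ n) (ha : 0 < a) (hh : 0 < h) (hR : 0 < R)
    (hx : 2 * n * a < ‖x - y‖ ^ 2 / h ^ 2) (hxR : ‖x - y‖ ^ 2 / h ^ 2 + a < R) :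
    0 < lap (barrier a R h y) x := by
  refine lt_of_lt_of_le ?_ (smoothTransition_mul_lap_le_lap_barrier ha)
  have := barrierExponent_pos hn
  have := sub_pos.2 (by linarith : n * a < ‖x - y‖ ^ 2 / h ^ 2 / 2)
  have := Real.smoothTransition.pos_of_pos
    (smoothRamp_pos_iff.1 ((barrier_pos_iff (h := h) (y := y) (x := x) hn ha hR).2 hxR))
  positivity

lemma neg_le_lap_barrier (hn : 2 ≤ n) (ha : 0 < a) :
    -(2 * n * barrierExponent n * a ^ (-barrierExponent n - 1) / h ^ 2) ≤
      lap (barrier a R h y) x := by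
  refine le_trans ?_ (smoothTransition_mul_lap_le_lap_barrier ha)
  set t := ‖x - y‖ ^ 2 / h ^ 2
  set p := barrierExponent n
  set χ := Real.smoothTransition (regularizedPower p a h y x - R ^ (-p))
  have hp : 0 < p := barrierExponent_pos hn
  have ht0 : 0 ≤ t := by positivity
  have hχ0 : 0 ≤ χ := Real.smoothTransition.nonneg _
  have hχ1 : χ ≤ 1 := Real.smoothTransition.le_one _
  have hpow : a * (t + a) ^ (-p - 2) ≤ a ^ (-p - 1) := by
    rw [show -p - 1 = -p - 2 + 1 by ring, Real.rpow_add_one ha.ne', mul_comm]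
    gcongr ?_ * _
    exact Real.rpow_le_rpow_of_nonpos ha (by linarith) (by linarith)
  calc -(2 * n * p * a ^ (-p - 1) / h ^ 2)
      ≤ -(χ * (2 * n * p * (a * (t + a) ^ (-p - 2)) / h ^ 2)) := by
        refine neg_le_neg ((mul_le_of_le_one_left (by positivity) hχ1).trans ?_)
        gcongr
    _ ≤ χ * (2 * p / h ^ 2 * (t + a) ^ (-p - 2) * (t / 2 - n * a)) := by
        have : 0 ≤ χ * (2 * p / h ^ 2 * (t + a) ^ (-p - 2) * (t / 2)) := by positivity
        linear_combination this

end Barrier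

/-! ### Local finiteness of the free boundary measure -/

section FreeBoundaryMeasure

variable {f Q u η ζ : EuclideanSpace ℝ (Fin n) → ℝ}

lemma measurableSet_frontier_inter_ball (S : Set (EuclideanSpace ℝ (Fin n))) :
    MeasurableSet (frontier S ∩ ball 0 1) :=
  isClosed_frontier.measurableSet.inter measurableSet_ball

lemma IsWeakSolution.isOpen_posSet (hu : IsWeakSolution f Q u) : IsOpen (posSet u) :=
  hu.contOn.isOpen_inter_preimage isOpen_ball isOpen_Ioi

/-- If `Q * ζ` failed to be integrable, then so would `Q * (ζ + t * η)` for every `t > 0`. -/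
lemma IsWeakSolution.integrableOn_mul (hu : IsWeakSolution f Q u)
    (hf : ∀ x ∈ ball 0 1, 0 ≤ f x) (hQ : ContinuousOn Q (ball 0 1)) (hQ0 : ∀ x ∈ ball 0 1, 0 ≤ Q x)
    (hζ : IsTestFunction (ball 0 1) ζ) (hζ0 : 0 ≤ ζ) (hζu : 0 < ∫ x, u x * lap ζ x)
    (hη : IsTestFunction (ball 0 1) η) (hη0 : 0 ≤ η) :
    IntegrableOn (fun x ↦ Q x * η x) (frontier (posSet u) ∩ ball 0 1) (μH[(n-1:ℝ)]) := by
  by_contra hni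
  have not_integrable (t : ℝ) (ht : 0 < t) :
      ¬IntegrableOn (fun x ↦ Q x * (ζ x + t * η x)) (frontier (posSet u) ∩ ball 0 1)
        (μH[(n-1:ℝ)]) := by
    refine fun hint ↦ hni <| (hint.const_mul t⁻¹).mono' ?_ ?_
    · exact ((hQ.mono inter_subset_right).mul hη.contDiff.continuous.continuousOn)
        |>.aestronglyMeasurable (measurableSet_frontier_inter_ball _)
    · refine ae_restrict_of_forall_mem (measurableSet_frontier_inter_ball _) fun x hx ↦ ?_
      have hQx := hQ0 x hx.2
      rw [Real.norm_of_nonneg (mul_nonneg hQx (hη0 x))]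
      have : 0 ≤ t⁻¹ * (Q x * ζ x) := mul_nonneg (by positivity) (mul_nonneg hQx (hζ0 x))
      calc Q x * η x ≤ t⁻¹ * (Q x * ζ x) + Q x * η x := le_add_of_nonneg_left this
        _ = t⁻¹ * (Q x * (ζ x + t * η x)) := by field_simp
  have nonpos (t : ℝ) (ht : 0 < t) :
      (∫ x, u x * lap ζ x) + t * ∫ x, u x * lap η x ≤ 0 := by
    have h := hu.integral_mul_lap (hζ.add_const_mul hη t)
    rw [integral_undef (not_integrable t ht), zero_sub] at h
    have hf_nonneg : 0 ≤ ∫ x in posSet u, f x * (ζ x + t * η x) :=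
      setIntegral_nonneg hu.isOpen_posSet.measurableSet fun x hx ↦
        mul_nonneg (hf x hx.1) (add_nonneg (hζ0 x) (mul_nonneg ht.le (hη0 x)))
    rw [← integral_const_mul, ← integral_add (hζ.integrable_mul_lap isOpen_ball hu.contOn)
      ((hη.integrable_mul_lap isOpen_ball hu.contOn).const_mul t)]
    calc ∫ x, u x * lap ζ x + t * (u x * lap η x)
        = ∫ x, u x * lap (fun x ↦ ζ x + t * η x) x := by
          congr 1 with x
          rw [lap_add_const_mul hη.contDiff hζ.contDiff]
          ring
      _ ≤ 0 := by linarith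
  have hlim : Tendsto (fun t : ℝ ↦ (∫ x, u x * lap ζ x) + t * ∫ x, u x * lap η x) (𝓝[>] 0)
      (𝓝 (∫ x, u x * lap ζ x)) :=
    tendsto_nhdsWithin_of_tendsto_nhds (Continuous.tendsto' (by fun_prop) _ _ (by simp))
  exact hζu.not_ge (le_of_tendsto hlim (eventually_mem_nhdsWithin.mono nonpos))

lemma exists_closedBall_mul_subset {E : Type*} [NormedAddCommGroup E] [NormedSpace ℝ E]
    [ProperSpace E] {U : Set E} (hU : IsOpen U) {z : E} {s : ℝ} (hs : 0 < s)
    (hsub : closedBall z s ⊆ U) : ∃ r > 1, closedBall z (r * s) ⊆ U := by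
  obtain ⟨δ, hδ, hδU⟩ := (isCompact_closedBall z s).exists_cthickening_subset_open hU hsub
  refine ⟨1 + δ / s, by simp [hδ, hs], ?_⟩
  rwa [cthickening_closedBall hδ.le hs.le,
    ← show (1 + δ / s) * s = δ + s by field_simp; ring] at hδU

lemma exists_pos_mul_lt_one_add_lt (c : ℝ) {R : ℝ} (hR : 1 < R) :
    ∃ a > 0, c * a < 1 ∧ 1 + a < R := by
  have h₁ : ∀ᶠ a : ℝ in 𝓝 0, c * a < 1 :=
    (Continuous.tendsto' (by fun_prop) 0 0 (by simp)).eventually_lt_const one_pos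
  have h₂ : ∀ᶠ a : ℝ in 𝓝 0, 1 + a < R :=
    (Continuous.tendsto' (by fun_prop) 0 1 (by simp)).eventually_lt_const hR
  exact (eventually_mem_nhdsWithin.and (nhdsWithin_le_nhds (s := Ioi 0) (h₁.and h₂))).exists

lemma exists_isTestFunction_integral_mul_lap_pos (hn : 2 ≤ n)
    {U : Set (EuclideanSpace ℝ (Fin n))} (hU : IsOpen U) (hu : ContinuousOn u U)
    (hu0 : ∀ x ∈ U, 0 ≤ u x) {x₀ z : EuclideanSpace ℝ (Fin n)} {s : ℝ} (hs : 0 < s)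
    (hsub : closedBall z s ⊆ U) (hzero : ∀ x ∈ ball z s, u x = 0) (htouch : x₀ ∈ sphere z s)
    (hx₀ : x₀ ∈ closure {x | x ∈ U ∧ 0 < u x}) :
    ∃ ζ, IsTestFunction U ζ ∧ 0 ≤ ζ ∧ 0 < ∫ x, u x * lap ζ x := by
  obtain ⟨r, hr, hrU⟩ := exists_closedBall_mul_subset hU hs hsub
  obtain ⟨a, ha, hna, har⟩ := exists_pos_mul_lt_one_add_lt (2 * n) (one_lt_pow₀ hr two_ne_zero)
  have hζ : IsTestFunction U (barrier a (r ^ 2) s z) :=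
    isTestFunction_barrier hn ha hs (r := r) (by linarith) (by positivity) (by linarith) hrU
  have outside {x} (hx : x ∉ ball z s) : 1 ≤ ‖x - z‖ ^ 2 / s ^ 2 := by
    rw [mem_ball, dist_eq_norm, not_lt] at hx
    rw [one_le_div (by positivity)]
    gcongr
  have integrand_nonneg : 0 ≤ fun x ↦ u x * lap (barrier a (r ^ 2) s z) x := by
    intro x
    by_cases hxζ : x ∈ tsupport (barrier a (r ^ 2) s z)
    · by_cases hx : x ∈ ball z s
      · simp [hzero x hx]
      · exact mul_nonneg (hu0 x (hζ.tsupport_subset hxζ))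
          (lap_barrier_nonneg hn ha (hna.le.trans (outside hx)))
    · simp [lap_eq_zero_of_notMem_tsupport hxζ]
  have hopen : ∀ᶠ x in 𝓝 x₀, ‖x - z‖ ^ 2 / s ^ 2 + a < r ^ 2 := by
    refine ContinuousAt.eventually_lt (by fun_prop) continuousAt_const ?_
    rwa [← dist_eq_norm, mem_sphere.1 htouch, div_self (by positivity)]
  obtain ⟨x, hx, -, hux⟩ := ((mem_closure_iff_frequently.1 hx₀).and_eventually hopen).exists.imp
    fun x h ↦ And.intro h.2 h.1
  have hlap : 0 < lap (barrier a (r ^ 2) s z) x :=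
    lap_barrier_pos hn ha hs (by positivity)
      (hna.trans_le (outside fun h ↦ hux.ne' (hzero x h))) hx
  refine ⟨_, hζ, fun _ ↦ barrier_nonneg, ?_⟩
  have hcont : Continuous fun x ↦ u x * lap (barrier a (r ^ 2) s z) x :=
    hζ.continuous_mul hU hu (continuous_lap hζ.contDiff) fun _ ↦ lap_eq_zero_of_notMem_tsupport
  exact hcont.integral_pos_of_hasCompactSupport_nonneg_nonzero
    (.intro hζ.hasCompactSupport fun x hx ↦ by simp [lap_eq_zero_of_notMem_tsupport hx])
    integrand_nonneg (mul_pos hux hlap).ne'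

end FreeBoundaryMeasure

/-! ### Slicing by hyperplanes -/

section PositivePart

variable {η : EuclideanSpace ℝ (Fin n) → ℝ}

lemma lipschitzWith_max_add_inner (e y : EuclideanSpace ℝ (Fin n)) (c : ℝ) :
    LipschitzWith ‖e‖₊ fun x ↦ max (c + ⟪e, x - y⟫) 0 := by
  refine (LipschitzWith.of_dist_le_mul fun x x' ↦ ?_).max_const 0
  rw [dist_add_left, Real.dist_eq, ← inner_sub_right, sub_sub_sub_cancel_right, dist_eq_norm]
  exact abs_real_inner_le_norm _ _

lemma isOpen_setOf_pos_add_inner (e y : EuclideanSpace ℝ (Fin n)) (c : ℝ) :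
    IsOpen {x | 0 < c + ⟪e, x - y⟫} :=
  isOpen_lt continuous_const (by fun_prop)

lemma gradient_max_add_inner {e x y : EuclideanSpace ℝ (Fin n)} {c : ℝ} :
    gradient (fun x ↦ max (c + ⟪e, x - y⟫) 0) x =
      {x | 0 < c + ⟪e, x - y⟫}.indicator (fun _ ↦ e) x := by
  by_cases hx : 0 < c + ⟪e, x - y⟫
  · have hev : (fun x ↦ max (c + ⟪e, x - y⟫) 0) =ᶠ[𝓝 x] fun x ↦ c + ⟪e, x - y⟫ :=
      ((isOpen_setOf_pos_add_inner e y c).eventually_mem hx).mono fun _ h ↦ max_eq_left (le_of_lt h)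
    have hderiv : HasFDerivAt (fun x ↦ c + ⟪e, x - y⟫) (innerSL ℝ e) x :=
      ((innerSL ℝ e).hasFDerivAt.comp x ((hasFDerivAt_id x).sub_const y)).const_add c
    rw [hev.gradient_eq, indicator_of_mem (by exact hx)]
    refine ext_inner_right ℝ fun v ↦ ?_
    rw [inner_gradient_left, hderiv.fderiv, innerSL_apply_apply]
  · have hmin : IsLocalMin (fun x ↦ max (c + ⟪e, x - y⟫) 0) x :=
      .of_forall fun x' ↦ (max_eq_right (not_lt.1 hx)).trans_le (le_max_right _ _)
    rw [indicator_of_notMem (by exact hx), gradient, hmin.fderiv_eq_zero, map_zero]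

lemma integral_max_add_inner_mul_lap (hη : ContDiff ℝ (⊤ : ℕ∞) η) (hc : HasCompactSupport η)
    (e y : EuclideanSpace ℝ (Fin n)) (c : ℝ) :
    ∫ x, max (c + ⟪e, x - y⟫) 0 * lap η x =
      -∫ x in {x | 0 < c + ⟪e, x - y⟫}, fderiv ℝ η x e := by
  rw [integral_mul_lap (lipschitzWith_max_add_inner e y c) hη hc,
    ← integral_indicator (isOpen_setOf_pos_add_inner e y c).measurableSet]
  congr 2 with x
  rw [gradient_max_add_inner, inner_gradient_right]
  by_cases hx : x ∈ {x | 0 < c + ⟪e, x - y⟫} <;>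
    simp [indicator_of_mem, indicator_of_notMem, hx]

end PositivePart

section Coordinates

variable {m : ℕ} (b : OrthonormalBasis (Fin (m + 1)) ℝ (EuclideanSpace ℝ (Fin (m + 1))))
  (y : EuclideanSpace ℝ (Fin (m + 1)))

/-- The point with coordinates `(t, w)` in the orthonormal frame `b` centred at `y`; the coordinate
`t` is the height along `b 0`. -/
def framePoint (t : ℝ) (w : Fin m → ℝ) : EuclideanSpace ℝ (Fin (m + 1)) :=
  y + b.repr.symm (WithLp.toLp 2 (Fin.cons t w))

/-- The coordinates of `x` other than the height, in the orthonormal frame `b` centred at `y`. -/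
def frameProj (x : EuclideanSpace ℝ (Fin (m + 1))) : Fin m → ℝ := fun j ↦ ⟪b j.succ, x - y⟫

@[simp]
lemma inner_framePoint_sub (t : ℝ) (w : Fin m → ℝ) : ⟪b 0, framePoint b y t w - y⟫ = t := by
  rw [framePoint, add_sub_cancel_left, ← b.repr_apply_apply, b.repr.apply_symm_apply]
  simp

@[simp]
lemma frameProj_framePoint (t : ℝ) (w : Fin m → ℝ) : frameProj b y (framePoint b y t w) = w := by
  funext j
  rw [frameProj, framePoint, add_sub_cancel_left, ← b.repr_apply_apply, b.repr.apply_symm_apply]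
  simp

lemma norm_sub_sq_eq (x : EuclideanSpace ℝ (Fin (m + 1))) :
    ‖x - y‖ ^ 2 = ⟪b 0, x - y⟫ ^ 2 + ∑ j, frameProj b y x j ^ 2 := by
  simpa [Fin.sum_univ_succ, frameProj] using (b.sum_sq_norm_inner_right (x - y)).symm

lemma norm_framePoint_sub_sq (t : ℝ) (w : Fin m → ℝ) :
    ‖framePoint b y t w - y‖ ^ 2 = t ^ 2 + ∑ j, w j ^ 2 := by
  simp [norm_sub_sq_eq b y]

lemma framePoint_eq_add_smul (t : ℝ) (w : Fin m → ℝ) :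
    framePoint b y t w = framePoint b y 0 w + t • b 0 := by
  simp only [framePoint, ← OrthonormalBasis.sum_repr_symm, Fin.sum_univ_succ]
  simp
  abel

lemma contDiff_framePoint_left (w : Fin m → ℝ) :
    ContDiff ℝ (⊤ : ℕ∞) fun t ↦ framePoint b y t w := by
  rw [funext fun t ↦ framePoint_eq_add_smul b y t w]
  fun_prop

lemma hasDerivAt_framePoint_left (t : ℝ) (w : Fin m → ℝ) :
    HasDerivAt (fun t ↦ framePoint b y t w) (b 0) t := by
  rw [funext fun t ↦ framePoint_eq_add_smul b y t w]
  simpa using ((hasDerivAt_id t).smul_const (b 0)).const_add (framePoint b y 0 w)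

lemma isometry_framePoint_left (w : Fin m → ℝ) : Isometry fun t ↦ framePoint b y t w := by
  refine Isometry.of_dist_eq fun t t' ↦ ?_
  rw [framePoint_eq_add_smul b y t, framePoint_eq_add_smul b y t', dist_add_left, dist_eq_norm,
    ← sub_smul, norm_smul, b.norm_eq_one, mul_one, Real.dist_eq, Real.norm_eq_abs]

lemma lipschitzWith_frameProj : LipschitzWith 1 (frameProj b y) := by
  refine LipschitzWith.of_dist_le_mul fun x x' ↦ ?_
  rw [NNReal.coe_one, one_mul, dist_pi_le_iff dist_nonneg]
  intro j
  rw [frameProj, frameProj, Real.dist_eq, ← inner_sub_right, sub_sub_sub_cancel_right, dist_eq_norm]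
  simpa using abs_real_inner_le_norm (b j.succ) (x - x')

/-- `framePoint` as a measurable equivalence, uncurried. -/
def frameEquiv : (ℝ × (Fin m → ℝ)) ≃ᵐ EuclideanSpace ℝ (Fin (m + 1)) :=
  (MeasurableEquiv.piFinSuccAbove (fun _ ↦ ℝ) 0).symm.trans <|
    (MeasurableEquiv.toLp 2 (Fin (m + 1) → ℝ)).trans <|
    b.repr.symm.toHomeomorph.toMeasurableEquiv.trans (Homeomorph.addLeft y).toMeasurableEquiv

lemma frameEquiv_apply (q : ℝ × (Fin m → ℝ)) : frameEquiv b y q = framePoint b y q.1 q.2 := by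
  rw [framePoint, ← Fin.insertNth_zero']
  rfl

lemma measurePreserving_frameEquiv : MeasurePreserving (frameEquiv b y) :=
  (measurePreserving_add_left volume y).comp <| b.measurePreserving_repr_symm.comp <|
    (PiLp.volume_preserving_toLp (Fin (m + 1))).comp
      (volume_preserving_piFinSuccAbove (fun _ ↦ ℝ) 0).symm

lemma integral_eq_integral_framePoint {F : EuclideanSpace ℝ (Fin (m + 1)) → ℝ}
    (hF : Integrable F) : ∫ x, F x = ∫ w, ∫ t, F (framePoint b y t w) := by
  have hF' : Integrable fun q ↦ F (frameEquiv b y q) :=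
    ((measurePreserving_frameEquiv b y).integrable_comp_emb
      (frameEquiv b y).measurableEmbedding).2 hF
  rw [← (measurePreserving_frameEquiv b y).integral_comp' F]
  rw [Measure.volume_eq_prod] at hF' ⊢
  rw [integral_prod_symm _ hF']
  simp only [frameEquiv_apply]

variable {η : EuclideanSpace ℝ (Fin (m + 1)) → ℝ}

lemma integral_Ioi_fderiv_framePoint (hη : ContDiff ℝ (⊤ : ℕ∞) η) (hc : HasCompactSupport η)
    (t : ℝ) (w : Fin m → ℝ) :
    ∫ s in Ioi t, fderiv ℝ η (framePoint b y s w) (b 0) = -η (framePoint b y t w) := by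
  have hline := (hc.comp_isClosedEmbedding (isometry_framePoint_left b y w).isClosedEmbedding)
    |>.integral_Ioi_deriv_eq
      ((hη.comp (contDiff_framePoint_left b y w)).of_le (by exact_mod_cast le_top)) t
  refine (setIntegral_congr_fun measurableSet_Ioi fun s _ ↦ ?_).trans hline
  exact ((hη.differentiable (by simp) _).hasFDerivAt.comp_hasDerivAt s
    (hasDerivAt_framePoint_left b y s w)).deriv.symm

lemma integral_max_mul_lap (hη : ContDiff ℝ (⊤ : ℕ∞) η) (hc : HasCompactSupport η) (c : ℝ) :
    ∫ x, max (c + ⟪b 0, x - y⟫) 0 * lap η x = ∫ w, η (framePoint b y (-c) w) := by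
  have hS := (isOpen_setOf_pos_add_inner (b 0) y c).measurableSet
  have hint : Integrable fun x ↦ fderiv ℝ η x (b 0) :=
    (contDiff_fderiv_apply hη (b 0)).continuous.integrable_of_hasCompactSupport
      (hasCompactSupport_fderiv_apply hc (b 0))
  rw [integral_max_add_inner_mul_lap hη hc, ← integral_indicator hS,
    integral_eq_integral_framePoint b y (hint.indicator hS), ← integral_neg]
  congr 1 with w
  rw [← neg_neg (η _), ← integral_Ioi_fderiv_framePoint b y hη hc (-c) w,
    ← integral_indicator measurableSet_Ioi]
  congr 2 with t
  simp only [indicator, mem_ofPred_eq, inner_framePoint_sub, mem_Ioi, neg_lt_iff_pos_add']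

end Coordinates

lemma integral_le_setIntegral_hausdorffMeasure {X ι : Type*} [Fintype ι] [MetricSpace X]
    [MeasurableSpace X] [BorelSpace X] {P : X → ι → ℝ} (hP : LipschitzWith 1 P) {S : Set X}
    (hS : MeasurableSet S) {g : (ι → ℝ) → ℝ} (hg : Continuous g) (hg0 : 0 ≤ g) {η : X → ℝ}
    (hη0 : ∀ x ∈ S, 0 ≤ η x) (hη : IntegrableOn η S μH[Fintype.card ι])
    (hsurj : ∀ w, 0 < g w → w ∈ P '' S) (hdom : ∀ x ∈ S, g (P x) ≤ η x) :
    ∫ w, g w ≤ ∫ x in S, η x ∂μH[Fintype.card ι] := by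
  have hPm : Measurable P := hP.continuous.measurable
  have hmeas : volume.restrict {w | 0 < g w} ≤
      (μH[Fintype.card ι].restrict S).map P := by
    refine Measure.le_iff.2 fun A hA ↦ ?_
    rw [Measure.restrict_apply hA, Measure.map_apply hPm hA, Measure.restrict_apply (hPm hA)]
    have hsub : A ∩ {w | 0 < g w} ⊆ P '' (P ⁻¹' A ∩ S) := by
      rintro w ⟨hwA, hwg⟩
      obtain ⟨x, hxS, rfl⟩ := hsurj w hwg
      exact ⟨x, ⟨hwA, hxS⟩, rfl⟩
    calc volume (A ∩ {w | 0 < g w}) ≤ volume (P '' (P ⁻¹' A ∩ S)) := measure_mono hsub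
      _ ≤ μH[Fintype.card ι] (P ⁻¹' A ∩ S) := by
        simpa [hausdorffMeasure_pi_real] using
          hP.hausdorffMeasure_image_le (d := Fintype.card ι) (by positivity) (P ⁻¹' A ∩ S)
  have hlint : ∫⁻ w, .ofReal (g w) ≤ ∫⁻ x in S, .ofReal (η x) ∂μH[Fintype.card ι] :=
    calc ∫⁻ w, .ofReal (g w) = ∫⁻ w in {w | 0 < g w}, .ofReal (g w) := by
          refine (setLIntegral_eq_of_support_subset fun w hw ↦ ?_).symm
          simpa using hw
      _ ≤ ∫⁻ w, .ofReal (g w) ∂(μH[Fintype.card ι].restrict S).map P :=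
          lintegral_mono' hmeas le_rfl
      _ = ∫⁻ x in S, .ofReal (g (P x)) ∂μH[Fintype.card ι] :=
          lintegral_map hg.measurable.ennreal_ofReal hPm
      _ ≤ ∫⁻ x in S, .ofReal (η x) ∂μH[Fintype.card ι] :=
          setLIntegral_mono' hS fun x hx ↦ ENNReal.ofReal_le_ofReal (hdom x hx)
  have hη0' := ae_restrict_of_forall_mem (μ := μH[Fintype.card ι]) hS hη0
  rw [integral_eq_lintegral_of_nonneg_ae (.of_forall hg0) hg.aestronglyMeasurable,
    integral_eq_lintegral_of_nonneg_ae hη0' hη.aestronglyMeasurable]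
  exact ENNReal.toReal_mono ((hasFiniteIntegral_iff_ofReal hη0').1 hη.2).ne hlint

/-! ### Geometry of the touching ball -/

section TouchingBall

variable {E : Type*} [NormedAddCommGroup E]

lemma infDist_ball [NormedSpace ℝ E] (x z : E) {s : ℝ} (hs : 0 < s) :
    infDist x (ball z s) = max (‖x - z‖ - s) 0 := by
  refine le_antisymm ?_ (max_le ?_ infDist_nonneg)
  · rcases lt_or_ge ‖x - z‖ s with hx | hx
    · rw [infDist_zero_of_mem (mem_ball_iff_norm.2 hx)]
      exact le_max_right _ _
    · have hxz : 0 < ‖x - z‖ := hs.trans_le hx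
      have hmem : z + (s / ‖x - z‖) • (x - z) ∈ closedBall z s := by
        simp [norm_smul, abs_of_pos hs, hxz.ne']
      rw [← infDist_closure, closure_ball z hs.ne']
      refine (infDist_le_dist_of_mem hmem).trans (le_max_of_le_left (le_of_eq ?_))
      rw [dist_eq_norm,
        show x - (z + (s / ‖x - z‖) • (x - z)) = (1 - s / ‖x - z‖) • (x - z) by module, norm_smul,
        Real.norm_of_nonneg (sub_nonneg.2 ((div_le_one hxz).2 hx))]
      field_simp
  · refine (le_infDist (nonempty_ball.2 hs)).2 fun w hw ↦ ?_
    rw [← dist_eq_norm]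
    linarith [dist_triangle x w z, mem_ball.1 hw]

variable [InnerProductSpace ℝ E] {e x y z : E} {s h σ : ℝ}

lemma norm_sub_sq_of_eq_add_smul (he : ‖e‖ = 1) (hy : y = z + (s + h) • e) :
    ‖x - z‖ ^ 2 = (s + h + ⟪e, x - y⟫) ^ 2 + (‖x - y‖ ^ 2 - ⟪e, x - y⟫ ^ 2) := by
  rw [show x - z = (x - y) + (s + h) • e by rw [hy]; abel, norm_add_sq_real, inner_smul_right,
    norm_smul, he, real_inner_comm, mul_one, Real.norm_eq_abs, sq_abs]
  ring

/-- At scale `h` the sphere of radius `s` deviates from its tangent plane by `O(h² / s)`, and the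
extra term `h * σ` absorbs this. -/
lemma infDist_ball_le_max_add_inner (he : ‖e‖ = 1) (hy : y = z + (s + h) • e) (hh : 0 < h)
    (hσ : 0 < σ) (hσ1 : σ ≤ 1) (hhs : 4 * h ≤ s * σ) (hx : ‖x - y‖ ≤ 2 * h) :
    infDist x (ball z s) ≤ max (h * (1 + σ) + ⟪e, x - y⟫) 0 := by
  have hs : 0 < s := pos_of_mul_pos_left (by linarith) hσ.le
  have hhs' : 4 * h ≤ s := hhs.trans (mul_le_of_le_one_right hs.le hσ1)
  refine (infDist_ball x z hs).trans_le (max_le ?_ (le_max_right _ _))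
  set t := ⟪e, x - y⟫
  set M := max (h * (1 + σ) + t) 0
  have htM : h * (1 + σ) + t ≤ M := le_max_left _ _
  have : 0 ≤ M := le_max_right _ _
  have ht : |t| ≤ ‖x - y‖ := by simpa [he] using abs_real_inner_le_norm e (x - y)
  have ht' := neg_le_of_abs_le (ht.trans hx)
  have hslack : (2 * h) ^ 2 ≤ 2 * (s + h + t) * (h * σ) := by
    have : 2 * h ≤ (s + h + t) * σ := by nlinarith
    nlinarith
  suffices ‖x - z‖ ≤ s + M by linarith
  refine le_of_sq_le_sq ?_ (by positivity)
  calc ‖x - z‖ ^ 2 = (s + h + t) ^ 2 + (‖x - y‖ ^ 2 - t ^ 2) := norm_sub_sq_of_eq_add_smul he hy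
    _ ≤ (s + h + t) ^ 2 + (2 * h) ^ 2 := by
      gcongr
      exact (sub_le_self _ (sq_nonneg t)).trans (by gcongr)
    _ ≤ (s + h + t + h * σ) ^ 2 := by nlinarith [sq_nonneg (h * σ)]
    _ ≤ (s + M) ^ 2 := by
      have : 0 ≤ s + h + t := by linarith
      exact pow_le_pow_left₀ (by positivity) (by linarith) 2

end TouchingBall

lemma exists_mem_frontier_of_continuous {X : Type*} [TopologicalSpace X] {γ : ℝ → X}
    (hγ : Continuous γ) {S : Set X} {t₀ t₁ : ℝ} (ht : t₀ ≤ t₁) (h₀ : γ t₀ ∉ S) (h₁ : γ t₁ ∈ S) :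
    ∃ t ∈ Icc t₀ t₁, γ t ∈ frontier S := by
  by_contra! hno
  have hsub : γ '' Icc t₀ t₁ ⊆ interior S ∪ (closure S)ᶜ := by
    rintro _ ⟨t, ht, rfl⟩
    exact or_iff_not_imp_right.2 fun h ↦ by_contra fun h' ↦ hno t ht ⟨not_not.1 h, h'⟩
  have hcl : γ t₁ ∈ interior S :=
    (hsub ⟨t₁, right_mem_Icc.2 ht, rfl⟩).resolve_right (not_not.2 (subset_closure h₁))
  obtain ⟨x, -, hx, hx'⟩ := (isPreconnected_Icc.image γ hγ.continuousOn) _ _ isOpen_interior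
    isClosed_closure.isOpen_compl hsub ⟨γ t₁, ⟨t₁, right_mem_Icc.2 ht, rfl⟩, hcl⟩
    ⟨γ t₀, ⟨t₀, left_mem_Icc.2 ht, rfl⟩,
      (hsub ⟨t₀, left_mem_Icc.2 ht, rfl⟩).resolve_left fun h ↦ h₀ (interior_subset h)⟩
  exact hx' (interior_subset_closure hx)

/-! ### Points where the slope is nearly optimal -/

/-- The point `y`, at distance `h` from the ball `ball z s` in direction `b 0`, nearly realizes the
slope `ℓ` of `u` against the distance to that ball: up to the error `σ`, the slope is at most `ℓ`
near `y` and at least `ℓ` at `y`, at a scale `h` so small that the ball looks flat. -/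
structure IsNearOptimal {m : ℕ} (u : EuclideanSpace ℝ (Fin (m + 1)) → ℝ)
    (b : OrthonormalBasis (Fin (m + 1)) ℝ (EuclideanSpace ℝ (Fin (m + 1))))
    (y z : EuclideanSpace ℝ (Fin (m + 1))) (s h ℓ σ : ℝ) (L : ℝ≥0) : Prop where
  pos : 0 < h
  eq_add_smul : y = z + (s + h) • b 0
  four_mul_le : 4 * h ≤ s * σ
  closedBall_subset : closedBall y (2 * h) ⊆ ball 0 1
  le_mul_infDist : ∀ x ∈ closedBall y (2 * h), u x ≤ (ℓ + σ) * infDist x (ball z s)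
  mul_le_apply : (ℓ - σ) * h ≤ u y
  lipschitzOnWith : LipschitzOnWith L u (closedBall y (2 * h))

namespace IsNearOptimal

variable {m : ℕ} {u : EuclideanSpace ℝ (Fin (m + 1)) → ℝ}
  {b : OrthonormalBasis (Fin (m + 1)) ℝ (EuclideanSpace ℝ (Fin (m + 1)))}
  {y z : EuclideanSpace ℝ (Fin (m + 1))} {s h ℓ σ lam : ℝ} {L : ℝ≥0}

lemma sub_le_apply (H : IsNearOptimal u b y z s h ℓ σ L) {x : EuclideanSpace ℝ (Fin (m + 1))}
    (hx : x ∈ closedBall y (2 * h)) : (ℓ - σ) * h - L * ‖x - y‖ ≤ u x := by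
  have := H.lipschitzOnWith.dist_le_mul y (mem_closedBall_self (by linarith [H.pos])) x hx
  rw [Real.dist_eq, dist_eq_norm, norm_sub_rev] at this
  linarith [le_of_abs_le this, H.mul_le_apply]

lemma apply_le_mul_max (H : IsNearOptimal u b y z s h ℓ σ L) (hℓ : 0 ≤ ℓ) (hσ : 0 < σ)
    (hσ1 : σ ≤ 1) {x : EuclideanSpace ℝ (Fin (m + 1))} (hx : x ∈ closedBall y (2 * h)) :
    u x ≤ (ℓ + σ) * max (h * (1 + σ) + ⟪b 0, x - y⟫) 0 := by
  refine (H.le_mul_infDist x hx).trans ?_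
  gcongr
  exact infDist_ball_le_max_add_inner (b.norm_eq_one 0) H.eq_add_smul H.pos hσ hσ1 H.four_mul_le
    (mem_closedBall_iff_norm.1 hx)

lemma mul_max_sub_apply_le (H : IsNearOptimal u b y z s h ℓ σ L) (hℓ : 0 ≤ ℓ) (hσ : 0 < σ)
    (hσ1 : σ ≤ 1) {κ : ℝ} (hκ : 0 ≤ κ) {x : EuclideanSpace ℝ (Fin (m + 1))}
    (hx : x ∈ closedBall y (2 * h)) (hxκ : ‖x - y‖ ≤ κ * (σ * h)) :
    (ℓ + σ) * max (h * (1 + σ) + ⟪b 0, x - y⟫) 0 - u x ≤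
      (2 + (ℓ + 1) * (1 + κ) + L * κ) * (σ * h) := by
  have hh := H.pos
  have hinner : ⟪b 0, x - y⟫ ≤ ‖x - y‖ := by simpa using real_inner_le_norm (b 0) (x - y)
  have hmax : max (h * (1 + σ) + ⟪b 0, x - y⟫) 0 ≤ h + (1 + κ) * (σ * h) :=
    max_le (by linarith) (by positivity)
  have hlow := H.sub_le_apply hx
  calc (ℓ + σ) * max (h * (1 + σ) + ⟪b 0, x - y⟫) 0 - u x
      ≤ (ℓ + σ) * (h + (1 + κ) * (σ * h)) - ((ℓ - σ) * h - L * (κ * (σ * h))) := by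
        gcongr
        exact le_trans (by gcongr) hlow
    _ = 2 * (σ * h) + (ℓ + σ) * ((1 + κ) * (σ * h)) + L * κ * (σ * h) := by ring
    _ ≤ 2 * (σ * h) + (ℓ + 1) * ((1 + κ) * (σ * h)) + L * κ * (σ * h) := by
      gcongr 2 * (σ * h) + ?_ * ((1 + κ) * (σ * h)) + L * κ * (σ * h)
      exact add_le_add le_rfl hσ1
    _ = _ := by ring

/-- The vertical segment over `w` runs from the zero set to the positivity set. -/
lemma exists_framePoint_mem_frontier (H : IsNearOptimal u b y z s h ℓ σ L)
    (hzero : ∀ x ∈ ball z s, u x = 0) (hlam : 0 ≤ lam) (hlam1 : lam ≤ 1) (hL : L * lam < ℓ - σ)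
    (hσ : 0 < σ) {w : Fin m → ℝ}
    (hw : (h * (1 + σ)) ^ 2 + ∑ j, w j ^ 2 < (1 + lam ^ 2) * h ^ 2) :
    ∃ t ∈ Icc (-(h * (1 + σ))) 0,
      framePoint b y t w ∈ frontier (posSet u) ∩ closedBall y (2 * h) := by
  have hh := H.pos
  have hlam2 : lam ^ 2 ≤ 1 := pow_le_one₀ hlam hlam1
  have hw' : ∑ j, w j ^ 2 < lam ^ 2 * h ^ 2 := by nlinarith [mul_pos hh (mul_pos hh hσ)]
  have hseg : ∀ t ∈ Icc (-(h * (1 + σ))) 0, framePoint b y t w ∈ closedBall y (2 * h) := by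
    intro t ht
    have ht2 : t ^ 2 ≤ (h * (1 + σ)) ^ 2 := by nlinarith [ht.1, ht.2]
    rw [mem_closedBall_iff_norm]
    refine le_of_sq_le_sq ?_ (by positivity)
    rw [norm_framePoint_sub_sq]
    nlinarith
  have hle : -(h * (1 + σ)) ≤ 0 := neg_nonpos.2 (by positivity)
  have hbottom : framePoint b y (-(h * (1 + σ))) w ∈ ball z s := by
    have hs : 0 < s := pos_of_mul_pos_left (by linarith [H.four_mul_le]) hσ.le
    rw [mem_ball_iff_norm]
    refine lt_of_pow_lt_pow_left₀ 2 hs.le ?_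
    rw [norm_sub_sq_of_eq_add_smul (b.norm_eq_one 0) H.eq_add_smul, norm_framePoint_sub_sq,
      inner_framePoint_sub]
    nlinarith [mul_le_mul_of_nonneg_right H.four_mul_le hh.le, mul_pos hh hσ]
  have htop : 0 < u (framePoint b y 0 w) := by
    refine lt_of_lt_of_le ?_ (H.sub_le_apply (hseg 0 (right_mem_Icc.2 hle)))
    have : ‖framePoint b y 0 w - y‖ ≤ lam * h := by
      refine le_of_sq_le_sq ?_ (by positivity)
      rw [norm_framePoint_sub_sq]
      nlinarith
    nlinarith [mul_le_mul_of_nonneg_left this L.2]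
  obtain ⟨t, ht, htf⟩ := exists_mem_frontier_of_continuous
    (S := posSet u) (contDiff_framePoint_left b y w).continuous hle
    (fun h ↦ h.2.ne' (hzero _ hbottom))
    ⟨H.closedBall_subset (hseg 0 (right_mem_Icc.2 hle)), htop⟩
  exact ⟨t, ht, htf, hseg t ht⟩

end IsNearOptimal

/-! ### Estimates for the barrier -/

lemma integral_mul_lap_le {U S : Set (EuclideanSpace ℝ (Fin n))}
    {η u w : EuclideanSpace ℝ (Fin n) → ℝ} (hU : IsOpen U) (hη : IsTestFunction U η)
    (hu : ContinuousOn u U) (hw : ContinuousOn w U) (huw : ∀ x ∈ tsupport η, u x ≤ w x)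
    (hS : MeasurableSet S) (hSfin : volume S ≠ ∞) {e N : ℝ} (he : 0 ≤ e) (hN : 0 ≤ N)
    (hlap : ∀ x ∉ S, 0 ≤ lap η x) (hlapN : ∀ x, -N ≤ lap η x)
    (hwu : ∀ x ∈ tsupport η ∩ S, w x - u x ≤ e) :
    ∫ x, u x * lap η x ≤ (∫ x, w x * lap η x) + e * N * volume.real S := by
  have hpt (x) : u x * lap η x ≤ w x * lap η x + S.indicator (fun _ ↦ e * N) x := by
    have hind : 0 ≤ S.indicator (fun _ ↦ e * N) x := indicator_nonneg (fun _ _ ↦ mul_nonneg he hN) x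
    by_cases hx : x ∈ tsupport η
    · rcases le_or_gt 0 (lap η x) with hpos | hneg
      · exact le_add_of_le_of_nonneg (mul_le_mul_of_nonneg_right (huw x hx) hpos) hind
      · have hxS : x ∈ S := by_contra fun h ↦ (hlap x h).not_gt hneg
        have : (w x - u x) * -lap η x ≤ e * N :=
          mul_le_mul (hwu x ⟨hx, hxS⟩) (neg_le.1 (hlapN x)) (neg_nonneg.2 hneg.le) he
        rw [indicator_of_mem hxS]
        linarith
    · simpa [lap_eq_zero_of_notMem_tsupport hx] using hind
  have hi : Integrable (S.indicator fun _ ↦ e * N) :=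
    (integrable_indicator_iff hS).2 (integrableOn_const hSfin)
  refine (integral_mono (hη.integrable_mul_lap hU hu)
    ((hη.integrable_mul_lap hU hw).add hi) hpt).trans_eq ?_
  rw [integral_add' (hη.integrable_mul_lap hU hw) hi, integral_indicator hS, setIntegral_const,
    smul_eq_mul, mul_comm (volume.real S)]

lemma setIntegral_mul_le {α : Type*} [MeasurableSpace α] {μ : Measure α} {A K : Set α}
    {f g : α → ℝ} (hA : MeasurableSet A) (hK : MeasurableSet K) (hKfin : μ K ≠ ∞) {F M : ℝ}
    (hF : 0 ≤ F) (hf0 : ∀ x ∈ A, 0 ≤ f x) (hfF : ∀ x ∈ K, f x ≤ F) (hg0 : 0 ≤ g)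
    (hgM : ∀ x, g x ≤ M) (hgK : ∀ x ∉ K, g x = 0) :
    ∫ x in A, f x * g x ∂μ ≤ F * M * μ.real K := by
  have hi : Integrable (K.indicator fun _ ↦ F * M) μ :=
    (integrable_indicator_iff hK).2 (integrableOn_const hKfin)
  calc ∫ x in A, f x * g x ∂μ ≤ ∫ x in A, K.indicator (fun _ ↦ F * M) x ∂μ := by
        refine integral_mono_of_nonneg
          (ae_restrict_of_forall_mem hA fun x hx ↦ mul_nonneg (hf0 x hx) (hg0 x)) hi.integrableOn
          (.of_forall fun x ↦ ?_)
        by_cases hx : x ∈ K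
        · rw [indicator_of_mem hx]
          exact mul_le_mul (hfF x hx) (hgM x) (hg0 x) hF
        · simp [hx, hgK x hx]
    _ ≤ ∫ x, K.indicator (fun _ ↦ F * M) x ∂μ := setIntegral_le_integral hi <| .of_forall fun x ↦
        indicator_nonneg (fun x _ ↦ mul_nonneg hF ((hg0 x).trans (hgM x))) x
    _ = F * M * μ.real K := by
      rw [integral_indicator hK, setIntegral_const, smul_eq_mul, mul_comm]

lemma volumeReal_closedBall (y : EuclideanSpace ℝ (Fin n)) {r : ℝ} (hr : 0 ≤ r) :
    volume.real (closedBall y r) =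
      r ^ n * volume.real (ball (0 : EuclideanSpace ℝ (Fin n)) 1) := by
  rw [Measure.real, Measure.addHaar_closedBall _ _ hr, ENNReal.toReal_mul,
    ENNReal.toReal_ofReal (by positivity), finrank_euclideanSpace_fin, Measure.real]

section Plane

variable {m : ℕ} (b : OrthonormalBasis (Fin (m + 1)) ℝ (EuclideanSpace ℝ (Fin (m + 1))))
  (y : EuclideanSpace ℝ (Fin (m + 1)))

lemma continuous_framePoint_right (t : ℝ) : Continuous (framePoint b y t) :=
  continuous_const.add <| b.repr.symm.continuous.comp <| (PiLp.continuous_toLp 2 _).comp <|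
    continuous_const.finCons continuous_id

lemma isClosedEmbedding_framePoint_right (t : ℝ) :
    Topology.IsClosedEmbedding (framePoint b y t) :=
  Function.LeftInverse.isClosedEmbedding (frameProj_framePoint b y t)
    (lipschitzWith_frameProj b y).continuous (continuous_framePoint_right b y t)

lemma integrable_comp_framePoint {η : EuclideanSpace ℝ (Fin (m + 1)) → ℝ} (hη : Continuous η)
    (hc : HasCompactSupport η) (t : ℝ) : Integrable fun w ↦ η (framePoint b y t w) :=
  (hη.comp (continuous_framePoint_right b y t)).integrable_of_hasCompactSupport <|
    hc.comp_isClosedEmbedding (isClosedEmbedding_framePoint_right b y t)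

end Plane

lemma exists_mul_pow_le_integral_barrier {m : ℕ} (hm : 1 ≤ m) {lam : ℝ} (hlam : lam ≠ 0) :
    ∃ G > 0, ∀ (b : OrthonormalBasis (Fin (m + 1)) ℝ (EuclideanSpace ℝ (Fin (m + 1))))
      (y : EuclideanSpace ℝ (Fin (m + 1))) {h σ : ℝ}, 0 < h → 0 < σ →
        (1 + σ) ^ 2 + σ ^ 2 ≤ 1 + lam ^ 2 / 2 →
        G * h ^ m ≤ ∫ w, barrier (σ ^ 2) (1 + lam ^ 2) h y (framePoint b y (-(h * (1 + σ))) w) := by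
  have hlam2 : 0 < lam ^ 2 := by positivity
  have htest {a h} (ha : 0 < a) (hh : 0 < h) (y : EuclideanSpace ℝ (Fin (m + 1))) :
      IsTestFunction univ (barrier a (1 + lam ^ 2) h y) :=
    isTestFunction_barrier (r := 1 + lam ^ 2) (by lia) ha hh (by positivity) (by positivity)
      (by nlinarith) (subset_univ _)
  let b₀ := EuclideanSpace.basisFun (Fin (m + 1)) ℝ
  let g₀ (w : Fin m → ℝ) := barrier (1 + lam ^ 2 / 2) (1 + lam ^ 2) 1 0 (framePoint b₀ 0 0 w)
  have htest₀ := htest (a := 1 + lam ^ 2 / 2) (by positivity) one_pos 0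
  refine ⟨∫ w, g₀ w, ?_, fun b y h σ hh hσ hsmall ↦ ?_⟩
  · refine Continuous.integral_pos_of_hasCompactSupport_nonneg_nonzero (x := 0)
      (htest₀.contDiff.continuous.comp (continuous_framePoint_right b₀ 0 0))
      (htest₀.hasCompactSupport.comp_isClosedEmbedding (isClosedEmbedding_framePoint_right b₀ 0 0))
      (fun w ↦ barrier_nonneg) (ne_of_gt ?_)
    rw [barrier_pos_iff (by lia) (by positivity) (by positivity), norm_framePoint_sub_sq]
    simp
    linarith
  have hscale : ∫ w, g₀ (h⁻¹ • w) = (∫ w, g₀ w) * h ^ m := by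
    rw [Measure.integral_comp_inv_smul, Module.finrank_fin_fun, abs_of_pos (by positivity),
      smul_eq_mul, mul_comm]
  rw [← hscale]
  have htest' := htest (a := σ ^ 2) (by positivity) hh y
  refine integral_mono_of_nonneg (.of_forall fun w ↦ barrier_nonneg)
    (integrable_comp_framePoint b y htest'.contDiff.continuous htest'.hasCompactSupport _)
    (.of_forall fun w ↦ barrier_le_barrier (by lia) (by positivity) ?_)
  rw [norm_framePoint_sub_sq, norm_framePoint_sub_sq]
  have : ((-(h * (1 + σ))) ^ 2 + ∑ j, w j ^ 2) / h ^ 2 = (1 + σ) ^ 2 + ∑ j, (h⁻¹ • w) j ^ 2 := by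
    simp only [Pi.smul_apply, smul_eq_mul, mul_pow, ← Finset.mul_sum]
    field_simp
  rw [this]
  linarith

lemma pow_mul_sq_rpow_neg_barrierExponent (m : ℕ) {σ : ℝ} (hσ : 0 < σ) :
    σ ^ (m + 2) * (σ ^ 2) ^ (-barrierExponent (m + 1) - 1) = √σ := by
  rw [Real.sqrt_eq_rpow, ← Real.rpow_natCast_mul hσ.le, ← Real.rpow_natCast, ← Real.rpow_add hσ]
  congr 1
  simp only [barrierExponent]
  push_cast
  ring

namespace IsNearOptimal

variable {m : ℕ} {u f Q : EuclideanSpace ℝ (Fin (m + 1)) → ℝ}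
  {b : OrthonormalBasis (Fin (m + 1)) ℝ (EuclideanSpace ℝ (Fin (m + 1)))}
  {y z : EuclideanSpace ℝ (Fin (m + 1))} {s h ℓ σ lam : ℝ} {L : ℝ≥0}

lemma isTestFunction_barrier (H : IsNearOptimal u b y z s h ℓ σ L) (hm : 1 ≤ m) (hσ : 0 < σ)
    (hlam : lam ^ 2 ≤ 1) : IsTestFunction (ball 0 1) (barrier (σ ^ 2) (1 + lam ^ 2) h y) :=
  _root_.isTestFunction_barrier (by lia) (by positivity) H.pos two_pos (by positivity)
    (by nlinarith) H.closedBall_subset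

lemma tsupport_barrier_subset (H : IsNearOptimal u b y z s h ℓ σ L) (hm : 1 ≤ m) (hσ : 0 < σ)
    (hlam : lam ^ 2 ≤ 1) :
    tsupport (barrier (σ ^ 2) (1 + lam ^ 2) h y) ⊆ closedBall y (2 * h) :=
  _root_.tsupport_barrier_subset (by lia) (by positivity) H.pos two_pos (by positivity)
    (by nlinarith)

/-- The constant in the error term `√σ * h ^ m` committed when `u` is replaced by the positive part
of an affine function of slope `ℓ + σ`. -/
def errorConst (m : ℕ) (ℓ : ℝ) (L : ℝ≥0) : ℝ :=
  (2 + (ℓ + 1) * (1 + 2 * (m + 1)) + L * (2 * (m + 1))) *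
    (2 * (m + 1) * barrierExponent (m + 1)) * (2 * (m + 1)) ^ (m + 1) *
      volume.real (ball (0 : EuclideanSpace ℝ (Fin (m + 1))) 1)

-- The core where the barrier is not subharmonic has radius `O(σ h)` and `u` misses the affine
-- function by `O(σ h)` there, while `Δη ≥ -O(σ ^ (-n - 1/2) h ^ -2)` as the exponent is
-- `n / 2 - 3 / 4`.
lemma integral_mul_lap_barrier_le (H : IsNearOptimal u b y z s h ℓ σ L) (hm : 1 ≤ m)
    (hu : ContinuousOn u (ball 0 1)) (hℓ : 0 ≤ ℓ) (hσ : 0 < σ) (hσ1 : σ ≤ 1) (hlam : lam ^ 2 ≤ 1) :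
    ∫ x, u x * lap (barrier (σ ^ 2) (1 + lam ^ 2) h y) x ≤
      (ℓ + σ) * (∫ w, barrier (σ ^ 2) (1 + lam ^ 2) h y (framePoint b y (-(h * (1 + σ))) w)) +
        errorConst m ℓ L * √σ * h ^ m := by
  have hh := H.pos
  have hp := barrierExponent_pos (n := m + 1) (by lia)
  have hη := H.isTestFunction_barrier hm hσ hlam
  have hsupp := H.tsupport_barrier_subset hm hσ hlam
  set κ : ℝ := 2 * (m + 1) with hκ
  have hκ1 : 1 ≤ κ := by rw [hκ]; linarith [(Nat.cast_nonneg m : (0 : ℝ) ≤ m)]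
  have hw : Continuous fun x ↦ (ℓ + σ) * max (h * (1 + σ) + ⟪b 0, x - y⟫) 0 :=
    continuous_const.mul (lipschitzWith_max_add_inner _ _ _).continuous
  have hcore : ∀ x ∉ closedBall y (κ * (σ * h)),
      0 ≤ lap (barrier (σ ^ 2) (1 + lam ^ 2) h y) x := fun x hx ↦ by
    refine lap_barrier_nonneg (by lia) (by positivity) ?_
    rw [mem_closedBall_iff_norm, not_le] at hx
    rw [le_div_iff₀ (by positivity)]
    calc 2 * ((m + 1 : ℕ) : ℝ) * σ ^ 2 * h ^ 2 = κ * (σ * h) ^ 2 := by push_cast; rw [hκ]; ring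
      _ ≤ κ ^ 2 * (σ * h) ^ 2 := by gcongr; nlinarith
      _ ≤ ‖x - y‖ ^ 2 := by rw [← mul_pow]; gcongr
  have hcmp := integral_mul_lap_le isOpen_ball hη hu hw.continuousOn
    (fun x hx ↦ H.apply_le_mul_max hℓ hσ hσ1 (hsupp hx)) measurableSet_closedBall
    measure_closedBall_lt_top.ne (by positivity) (by positivity) hcore
    (fun x ↦ neg_le_lap_barrier (by lia) (by positivity))
    (fun x hx ↦ H.mul_max_sub_apply_le hℓ hσ hσ1 (by positivity) (hsupp hx.1)
      (mem_closedBall_iff_norm.1 hx.2))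
  refine hcmp.trans_eq ?_
  simp_rw [mul_assoc (ℓ + σ), integral_const_mul]
  rw [integral_max_mul_lap b y hη.contDiff hη.hasCompactSupport,
    volumeReal_closedBall _ (by positivity)]
  congr 1
  rw [errorConst, ← pow_mul_sq_rpow_neg_barrierExponent m hσ, ← hκ]
  push_cast
  generalize (σ ^ 2) ^ (-barrierExponent (m + 1) - 1) = X
  rw [← hκ]
  field_simp
  rw [mul_pow, mul_pow]
  ring

lemma mul_barrier_le_mul_barrier (H : IsNearOptimal u b y z s h ℓ σ L) (hm : 1 ≤ m) (hσ : 0 < σ)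
    (hlam : lam ^ 2 ≤ 1) {q : ℝ} (hqQ : ∀ x ∈ closedBall y (2 * h), q ≤ Q x)
    (x : EuclideanSpace ℝ (Fin (m + 1))) :
    q * barrier (σ ^ 2) (1 + lam ^ 2) h y x ≤ Q x * barrier (σ ^ 2) (1 + lam ^ 2) h y x := by
  by_cases hx : x ∈ tsupport (barrier (σ ^ 2) (1 + lam ^ 2) h y)
  · exact mul_le_mul_of_nonneg_right (hqQ x (H.tsupport_barrier_subset hm hσ hlam hx))
      barrier_nonneg
  · simp [image_eq_zero_of_notMem_tsupport hx]

lemma mul_integral_barrier_le (H : IsNearOptimal u b y z s h ℓ σ L) (hm : 1 ≤ m)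
    (hzero : ∀ x ∈ ball z s, u x = 0) (hlam : 0 ≤ lam) (hlam1 : lam ≤ 1) (hL : L * lam < ℓ - σ)
    (hσ : 0 < σ) {q : ℝ} (hq : 0 ≤ q) (hQ0 : ∀ x ∈ ball 0 1, 0 ≤ Q x)
    (hqQ : ∀ x ∈ closedBall y (2 * h), q ≤ Q x)
    (hint : IntegrableOn (fun x ↦ Q x * barrier (σ ^ 2) (1 + lam ^ 2) h y x)
      (frontier (posSet u) ∩ ball 0 1) (μH[((m + 1 : ℕ) - 1 : ℝ)])) :
    q * (∫ w, barrier (σ ^ 2) (1 + lam ^ 2) h y (framePoint b y (-(h * (1 + σ))) w)) ≤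
      ∫ x in frontier (posSet u) ∩ ball 0 1,
        Q x * barrier (σ ^ 2) (1 + lam ^ 2) h y x ∂(μH[((m + 1 : ℕ) - 1 : ℝ)]) := by
  have hh := H.pos
  have hη := H.isTestFunction_barrier hm hσ (pow_le_one₀ hlam hlam1)
  set η := barrier (σ ^ 2) (1 + lam ^ 2) h y
  have hη0 : 0 ≤ η := fun x ↦ barrier_nonneg
  have hQη0 : ∀ x ∈ frontier (posSet u) ∩ ball 0 1, 0 ≤ Q x * η x :=
    fun x hx ↦ mul_nonneg (hQ0 x hx.2) (hη0 x)
  set S := frontier (posSet u) ∩ ball 0 1 ∩ {x | ⟪b 0, x - y⟫ ^ 2 ≤ (h * (1 + σ)) ^ 2}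
  have hmeas := measurableSet_frontier_inter_ball (posSet u)
  have hdim : ((m + 1 : ℕ) - 1 : ℝ) = Fintype.card (Fin m) := by simp
  rw [hdim] at hint ⊢
  have hS : MeasurableSet S :=
    hmeas.inter (isClosed_le (by fun_prop) continuous_const).measurableSet
  rw [← integral_const_mul]
  refine (integral_le_setIntegral_hausdorffMeasure (lipschitzWith_frameProj b y) hS
    (continuous_const.mul (hη.contDiff.continuous.comp (continuous_framePoint_right b y _)))
    (fun w ↦ mul_nonneg hq (hη0 _)) (fun x hx ↦ hQη0 x hx.1) (hint.mono_set inter_subset_left)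
    (fun w hw ↦ ?_) fun x hx ↦ ?_).trans
      (setIntegral_mono_set hint (ae_restrict_of_forall_mem hmeas hQη0)
        inter_subset_left.eventuallyLE)
  · have hpos := (barrier_pos_iff (by lia) (by positivity) (by positivity)).1
      (pos_of_mul_pos_right hw hq)
    rw [norm_framePoint_sub_sq, neg_sq] at hpos
    obtain ⟨t, ht, hfr, hball⟩ := H.exists_framePoint_mem_frontier hzero hlam hlam1 hL hσ (w := w)
      ((div_lt_iff₀ (by positivity)).1 (by linarith [sq_nonneg σ]))
    refine ⟨framePoint b y t w, ⟨⟨hfr, H.closedBall_subset hball⟩, ?_⟩, by simp⟩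
    rw [mem_ofPred, inner_framePoint_sub]
    nlinarith [ht.1, ht.2]
  · refine (mul_le_mul_of_nonneg_left (barrier_le_barrier (by lia) (by positivity) ?_) hq).trans
      (H.mul_barrier_le_mul_barrier hm hσ (pow_le_one₀ hlam hlam1) hqQ x)
    rw [norm_framePoint_sub_sq, norm_sub_sq_eq b y x, neg_sq]
    gcongr ?_ / _ + _
    exact add_le_add_left hx.2 _

/-- The constant in the error term `h * h ^ m` contributed by the right-hand side `f ≤ F`. -/
def sourceConst (m : ℕ) (F σ lam : ℝ) : ℝ :=
  F * barrier (σ ^ 2) (1 + lam ^ 2) 1 (0 : EuclideanSpace ℝ (Fin (m + 1))) 0 *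
    (2 ^ (m + 1) * volume.real (ball (0 : EuclideanSpace ℝ (Fin (m + 1))) 1))

lemma setIntegral_mul_barrier_le (H : IsNearOptimal u b y z s h ℓ σ L) (hm : 1 ≤ m)
    (hu : IsWeakSolution f Q u) (hf0 : ∀ x ∈ ball 0 1, 0 ≤ f x) (hσ : 0 < σ) (hlam : lam ^ 2 ≤ 1)
    {F : ℝ} (hF : 0 ≤ F) (hfF : ∀ x ∈ closedBall y (2 * h), f x ≤ F) :
    ∫ x in posSet u, f x * barrier (σ ^ 2) (1 + lam ^ 2) h y x ≤
      sourceConst m F σ lam * h * h ^ m := by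
  have hh := H.pos
  have hM (x) : barrier (σ ^ 2) (1 + lam ^ 2) h y x ≤
      barrier (σ ^ 2) (1 + lam ^ 2) 1 (0 : EuclideanSpace ℝ (Fin (m + 1))) 0 :=
    barrier_le_barrier (by lia) (by positivity) <| by
      rw [sub_self, norm_zero, zero_pow two_ne_zero, zero_div]
      gcongr
      positivity
  refine (setIntegral_mul_le hu.isOpen_posSet.measurableSet measurableSet_closedBall
    measure_closedBall_lt_top.ne hF (fun x hx ↦ hf0 x hx.1) hfF (fun x ↦ barrier_nonneg) hM
    fun x hx ↦ image_eq_zero_of_notMem_tsupport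
      (notMem_subset (H.tsupport_barrier_subset hm hσ hlam) hx)).trans_eq ?_
  rw [volumeReal_closedBall _ (by positivity), sourceConst]
  ring

lemma sub_mul_le (H : IsNearOptimal u b y z s h ℓ σ L) (hm : 1 ≤ m) (hu : IsWeakSolution f Q u)
    (hf0 : ∀ x ∈ ball 0 1, 0 ≤ f x) (hQ0 : ∀ x ∈ ball 0 1, 0 ≤ Q x)
    (hint : ∀ η, IsTestFunction (ball 0 1) η → 0 ≤ η → IntegrableOn (fun x ↦ Q x * η x)
      (frontier (posSet u) ∩ ball 0 1) (μH[((m + 1 : ℕ) - 1 : ℝ)]))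
    (hzero : ∀ x ∈ ball z s, u x = 0) (hℓ : 0 ≤ ℓ) (hlam : 0 ≤ lam) (hlam1 : lam ≤ 1)
    (hL : L * lam < ℓ - σ) (hσ : 0 < σ) (hσ1 : σ ≤ 1) {q F G : ℝ} (hq : ℓ + σ ≤ q)
    (hqQ : ∀ x ∈ closedBall y (2 * h), q ≤ Q x) (hF : 0 ≤ F)
    (hfF : ∀ x ∈ closedBall y (2 * h), f x ≤ F)
    (hG : G * h ^ m ≤
      ∫ w, barrier (σ ^ 2) (1 + lam ^ 2) h y (framePoint b y (-(h * (1 + σ))) w)) :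
    (q - ℓ - σ) * G ≤ errorConst m ℓ L * √σ + sourceConst m F σ lam * h := by
  have hlam2 : lam ^ 2 ≤ 1 := pow_le_one₀ hlam hlam1
  have hupper := H.integral_mul_lap_barrier_le hm hu.contOn hℓ hσ hσ1 hlam2
  have hlower := H.mul_integral_barrier_le hm hzero hlam hlam1 hL hσ (by linarith) hQ0 hqQ <|
    hint _ (H.isTestFunction_barrier hm hσ hlam2) fun x ↦ barrier_nonneg
  have hsource := H.setIntegral_mul_barrier_le hm hu hf0 hσ hlam2 hF hfF
  rw [hu.integral_mul_lap (H.isTestFunction_barrier hm hσ hlam2)] at hupper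
  refine le_of_mul_le_mul_right ?_ (pow_pos H.pos m)
  calc (q - ℓ - σ) * G * h ^ m = (q - ℓ - σ) * (G * h ^ m) := mul_assoc ..
    _ ≤ (q - ℓ - σ) *
        ∫ w, barrier (σ ^ 2) (1 + lam ^ 2) h y (framePoint b y (-(h * (1 + σ))) w) := by
      gcongr
      linarith
    _ ≤ (errorConst m ℓ L * √σ + sourceConst m F σ lam * h) * h ^ m := by linarith

end IsNearOptimal

/-! ### The sharp slope at the touching point -/

lemma norm_setAverage_le_of_norm_le {X E : Type*} [MeasurableSpace X] [NormedAddCommGroup E]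
    [NormedSpace ℝ E] (μ : Measure X) {S : Set X} {v : X → E} {C : ℝ} (hC : 0 ≤ C)
    (h : ∀ x ∈ S, ‖v x‖ ≤ C) : ‖⨍ x in S, v x ∂μ‖ ≤ C := by
  rw [setAverage_eq, norm_smul, norm_inv, Real.norm_of_nonneg measureReal_nonneg]
  rcases eq_or_ne (μ S) ⊤ with hS | hS
  · simpa [Measure.real, hS] using hC
  · exact inv_mul_le_of_le_mul₀ measureReal_nonneg hC
      ((norm_setIntegral_le_of_norm_le_const hS.lt_top h).trans_eq (mul_comm _ _))

lemma IsWeakSolution.exists_frequently_mul_infDist_lt {f Q u : EuclideanSpace ℝ (Fin n) → ℝ}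
    {x₀ : EuclideanSpace ℝ (Fin n)} (hu : IsWeakSolution f Q u)
    (hx₀ : x₀ ∈ frontier (posSet u) ∩ ball 0 1) {S : Set (EuclideanSpace ℝ (Fin n))}
    (hS : x₀ ∈ closure S) : ∃ c > 0, ∃ᶠ x in 𝓝 x₀, c * infDist x S < u x := by
  obtain ⟨r, hr, hsub⟩ := nhds_basis_closedBall.mem_iff.1 (isOpen_ball.mem_nhds hx₀.2)
  obtain ⟨c, _, hc, -, hmean⟩ := hu.nondeg (ball x₀ r) isOpen_ball
    (closure_ball_subset_closedBall.trans hsub)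
  refine ⟨c / 2, half_pos hc, fun hbad ↦ ?_⟩
  simp only [not_lt] at hbad
  obtain ⟨t, ht, hbad⟩ := nhds_basis_closedBall.eventually_iff.1 hbad
  set ρ := min r t
  have hρ : 0 < ρ := lt_min hr ht
  have hmean := (hmean x₀ ρ hρ (ball_subset_ball (min_le_left _ _)) hx₀.1).1
  have hle : ‖⨍ x in sphere x₀ ρ, u x ∂(μH[(n-1:ℝ)])‖ ≤ c / 2 * ρ := by
    refine norm_setAverage_le_of_norm_le _ (by positivity) fun x hx ↦ ?_
    have hxρ : x ∈ closedBall x₀ ρ := sphere_subset_closedBall hx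
    have hx1 : x ∈ ball 0 1 := hsub (closedBall_subset_closedBall (min_le_left _ _) hxρ)
    rw [Real.norm_of_nonneg (hu.nonneg x hx1)]
    refine (hbad (closedBall_subset_closedBall (min_le_right _ _) hxρ)).trans ?_
    rw [← infDist_closure, ← mem_sphere.1 hx]
    gcongr
    exact infDist_le_dist_of_mem hS
  have : c ≤ 1 / ρ * (c / 2 * ρ) := hmean.trans (by gcongr; exact (le_abs_self _).trans hle)
  field_simp at this
  linarith

lemma exists_sharp_slope {X : Type*} {l : Filter X} {u d : X → ℝ} {a c : ℝ} (hd : 0 ≤ d)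
    (hc : ∃ᶠ x in l, c * d x < u x) (ha : ∀ᶠ x in l, u x ≤ a * d x) :
    ∃ ℓ ∈ Icc c a, ∀ σ > 0,
      (∀ᶠ x in l, u x ≤ (ℓ + σ) * d x) ∧ ∃ᶠ x in l, (ℓ - σ) * d x < u x := by
  set S := {t | ∀ᶠ x in l, u x ≤ t * d x}
  have hmono {t t'} (htt' : t ≤ t') (ht : t ∈ S) : t' ∈ S :=
    ht.mono fun x hx ↦ hx.trans (mul_le_mul_of_nonneg_right htt' (hd x))
  have hlower {t} (ht : ∃ᶠ x in l, t * d x < u x) : t ∈ lowerBounds S := fun t' ht' ↦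
    not_lt.1 fun h ↦ ht ((hmono h.le ht').mono fun x hx ↦ not_lt.2 hx)
  refine ⟨sInf S, ⟨le_csInf ⟨a, ha⟩ (hlower hc), csInf_le ⟨c, hlower hc⟩ ha⟩, fun σ hσ ↦ ⟨?_, ?_⟩⟩
  · obtain ⟨t, ht, htσ⟩ := exists_lt_of_csInf_lt ⟨a, ha⟩ (lt_add_of_pos_right (sInf S) hσ)
    exact hmono htσ.le ht
  · refine fun h ↦ (sub_lt_self (sInf S) hσ).not_ge (csInf_le ⟨c, hlower hc⟩ ?_)
    exact h.mono fun x hx ↦ not_lt.1 hx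

lemma IsWeakSolution.exists_sharp_slope {f Q u : EuclideanSpace ℝ (Fin n) → ℝ}
    {x₀ : EuclideanSpace ℝ (Fin n)} (hu : IsWeakSolution f Q u)
    (hx₀ : x₀ ∈ frontier (posSet u) ∩ ball 0 1) {S : Set (EuclideanSpace ℝ (Fin n))}
    (hS : x₀ ∈ closure S) {a : ℝ} (ha : ∀ᶠ x in 𝓝 x₀, u x ≤ a * infDist x S) :
    ∃ ℓ ∈ Ioc 0 a, ∀ σ > 0, (∀ᶠ x in 𝓝 x₀, u x ≤ (ℓ + σ) * infDist x S) ∧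
      ∃ᶠ x in 𝓝 x₀, (ℓ - σ) * infDist x S < u x := by
  obtain ⟨c, hc, hgrowth⟩ := hu.exists_frequently_mul_infDist_lt hx₀ hS
  obtain ⟨ℓ, hℓ, hsharp⟩ := _root_.exists_sharp_slope (fun _ ↦ infDist_nonneg) hgrowth ha
  exact ⟨ℓ, ⟨hc.trans_le hℓ.1, hℓ.2⟩, hsharp⟩

lemma tendsto_infDist_nhds_zero {X : Type*} [PseudoMetricSpace X] {x : X} {S : Set X}
    (hx : x ∈ closure S) : Tendsto (infDist · S) (𝓝 x) (𝓝 0) :=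
  infDist_zero_of_mem_closure hx ▸ (continuous_infDist_pt S).tendsto x

lemma eventually_forall_mem_closedBall {X : Type*} [PseudoMetricSpace X] {x₀ : X} {r : X → ℝ}
    (hr : Tendsto r (𝓝 x₀) (𝓝 0)) {P : X → Prop} (hP : ∀ᶠ x in 𝓝 x₀, P x) :
    ∀ᶠ y in 𝓝 x₀, ∀ x ∈ closedBall y (r y), P x := by
  obtain ⟨ρ, hρ, hP⟩ := Metric.eventually_nhds_iff_ball.1 hP
  filter_upwards [ball_mem_nhds x₀ (half_pos hρ), hr.eventually_lt_const (half_pos hρ)]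
    with y hy hry x hx
  refine hP x (mem_ball.2 ?_)
  linarith [dist_triangle x y x₀, mem_ball.1 hy, mem_closedBall.1 hx]

lemma exists_orthonormalBasis_apply_zero_eq {m : ℕ} {e : EuclideanSpace ℝ (Fin (m + 1))}
    (he : ‖e‖ = 1) :
    ∃ b : OrthonormalBasis (Fin (m + 1)) ℝ (EuclideanSpace ℝ (Fin (m + 1))), b 0 = e := by
  obtain ⟨b, hb⟩ := Orthonormal.exists_orthonormalBasis_extension_of_card_eq
    (𝕜 := ℝ) (E := EuclideanSpace ℝ (Fin (m + 1))) (by simp) (v := fun _ ↦ e)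
    (s := {(0 : Fin (m + 1))})
    ⟨fun _ ↦ by simpa using he, fun i j hij ↦ (hij (Subsingleton.elim i j)).elim⟩
  exact ⟨b, hb 0 rfl⟩

lemma exists_pos_lt_one_mul_lt (L : ℝ) {ℓ : ℝ} (hℓ : 0 < ℓ) : ∃ t > 0, t < 1 ∧ L * t < ℓ := by
  have h₁ : ∀ᶠ t in 𝓝 (0 : ℝ), t < 1 := eventually_lt_nhds one_pos
  have h₂ : ∀ᶠ t in 𝓝 (0 : ℝ), L * t < ℓ :=
    ContinuousAt.eventually_lt (by fun_prop) continuousAt_const (by simpa)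
  obtain ⟨t, ht, ht₁, ht₂⟩ :=
    (eventually_mem_nhdsWithin.and (nhdsWithin_le_nhds (s := Ioi 0) (h₁.and h₂))).exists
  exact ⟨t, ht, ht₁, ht₂⟩

lemma eventually_nhdsGT_small {ℓ q c lam : ℝ} (hq : ℓ < q) (hc : c < ℓ) (hlam : lam ≠ 0) :
    ∀ᶠ σ in 𝓝[>] (0 : ℝ),
      σ < 1 ∧ ℓ + σ < q ∧ c < ℓ - σ ∧ (1 + σ) ^ 2 + σ ^ 2 < 1 + lam ^ 2 / 2 := by
  refine nhdsWithin_le_nhds (Filter.Eventually.and ?_ (.and ?_ (.and ?_ ?_))) <;>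
  refine ContinuousAt.eventually_lt (by fun_prop) (by fun_prop) ?_ <;>
  simp [*, sq_pos_of_ne_zero]

section SharpSlope

variable {m : ℕ} {u : EuclideanSpace ℝ (Fin (m + 1)) → ℝ} {x₀ z : EuclideanSpace ℝ (Fin (m + 1))}
  {s ℓ σ : ℝ}

lemma frequently_isNearOptimal {U : Set (EuclideanSpace ℝ (Fin (m + 1)))} {L : ℝ≥0}
    (hx₀ : x₀ ∈ ball 0 1) (hs : 0 < s) (htouch : x₀ ∈ closure (ball z s)) (hσ : 0 < σ)
    (hU : U ∈ 𝓝 x₀) (hL : LipschitzOnWith L u U)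
    (hup : ∀ᶠ x in 𝓝 x₀, u x ≤ (ℓ + σ) * infDist x (ball z s))
    (hlow : ∃ᶠ x in 𝓝 x₀, (ℓ - σ) * infDist x (ball z s) < u x) :
    ∃ᶠ y in 𝓝 x₀, ∃ b, IsNearOptimal u b y z s (infDist y (ball z s)) ℓ σ L := by
  have hdist := tendsto_infDist_nhds_zero htouch
  have hnear := eventually_forall_mem_closedBall
    (by simpa using hdist.const_mul 2) ((isOpen_ball.eventually_mem hx₀).and (hup.and hU))
  have hsmall := (hdist.const_mul 4).eventually_lt_const (u := s * σ) (by rw [mul_zero]; positivity)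
  refine (hlow.and_eventually (hsmall.and (hnear.and hup))).mono ?_
  rintro y ⟨hy, hyσ, hnear, hupy⟩
  have hpos : 0 < infDist y (ball z s) := by nlinarith [infDist_nonneg (x := y) (s := ball z s)]
  have heq : s + infDist y (ball z s) = ‖y - z‖ := by
    rw [infDist_ball y z hs] at hpos ⊢
    rw [max_eq_left ((lt_max_iff.1 hpos).resolve_right (lt_irrefl _)).le]
    ring
  have hyz : 0 < ‖y - z‖ := heq ▸ add_pos hs hpos
  obtain ⟨b, hb⟩ := exists_orthonormalBasis_apply_zero_eq
    (norm_smul_inv_norm (𝕜 := ℝ) (norm_pos_iff.1 hyz))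
  refine ⟨b, hpos, ?_, hyσ.le, fun x hx ↦ (hnear x hx).1, fun x hx ↦ (hnear x hx).2.1, hy.le,
    hL.mono fun x hx ↦ (hnear x hx).2.2⟩
  rw [heq, hb, smul_smul]
  simp [hyz.ne']

lemma mul_le_errorConst_mul_sqrt {f Q : EuclideanSpace ℝ (Fin (m + 1)) → ℝ} {lam : ℝ} {L : ℝ≥0}
    (hm : 1 ≤ m) (hu : IsWeakSolution f Q u) (hf0 : ∀ x ∈ ball 0 1, 0 ≤ f x)
    (hQ0 : ∀ x ∈ ball 0 1, 0 ≤ Q x)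
    (hint : ∀ η, IsTestFunction (ball 0 1) η → 0 ≤ η → IntegrableOn (fun x ↦ Q x * η x)
      (frontier (posSet u) ∩ ball 0 1) (μH[((m + 1 : ℕ) - 1 : ℝ)]))
    (htouch : x₀ ∈ closure (ball z s)) (hzero : ∀ x ∈ ball z s, u x = 0) (hℓ : 0 ≤ ℓ)
    (hlam : 0 ≤ lam) (hlam1 : lam ≤ 1) (hL : L * lam < ℓ - σ) (hσ : 0 < σ) (hσ1 : σ ≤ 1)
    {q F G : ℝ} (hq : ℓ + σ ≤ q) (hqQ : ∀ᶠ x in 𝓝 x₀, q ≤ Q x) (hF : 0 ≤ F)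
    (hfF : ∀ᶠ x in 𝓝 x₀, f x ≤ F)
    (hG : ∀ b y {h : ℝ}, 0 < h → G * h ^ m ≤
      ∫ w, barrier (σ ^ 2) (1 + lam ^ 2) h y (framePoint (m := m) b y (-(h * (1 + σ))) w))
    (hopt : ∃ᶠ y in 𝓝 x₀, ∃ b, IsNearOptimal u b y z s (infDist y (ball z s)) ℓ σ L) :
    (q - ℓ - σ) * G ≤ IsNearOptimal.errorConst m ℓ L * √σ := by
  have hdist := tendsto_infDist_nhds_zero htouch
  have hnear := eventually_forall_mem_closedBall (by simpa using hdist.const_mul 2) (hqQ.and hfF)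
  have hlim : Tendsto (fun y ↦ IsNearOptimal.errorConst m ℓ L * √σ +
      IsNearOptimal.sourceConst m F σ lam * infDist y (ball z s)) (𝓝 x₀)
      (𝓝 (IsNearOptimal.errorConst m ℓ L * √σ)) := by
    simpa using (hdist.const_mul (IsNearOptimal.sourceConst m F σ lam)).const_add
      (IsNearOptimal.errorConst m ℓ L * √σ)
  refine ge_of_tendsto_of_frequently hlim ((hopt.and_eventually hnear).mono ?_)
  rintro y ⟨⟨b, H⟩, hnear⟩
  exact H.sub_mul_le hm hu hf0 hQ0 hint hzero hℓ hlam hlam1 hL hσ hσ1 hq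
    (fun x hx ↦ (hnear x hx).1) hF (fun x hx ↦ (hnear x hx).2) (hG b y H.pos)

lemma mem_closure_ball_of_mem_sphere (hs : 0 < s) (htouch : x₀ ∈ sphere z s) :
    x₀ ∈ closure (ball z s) := by
  rw [closure_ball z hs.ne']
  exact sphere_subset_closedBall htouch

lemma IsWeakSolution.le_of_eventually_le_mul_infDist_ball
    {f Q : EuclideanSpace ℝ (Fin (m + 1)) → ℝ} {a : ℝ} (hm : 1 ≤ m)
    (hu : IsWeakSolution f Q u) (hf : ContinuousOn f (ball 0 1)) (hf0 : ∀ x ∈ ball 0 1, 0 ≤ f x)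
    (hQ : ContinuousOn Q (ball 0 1)) (hQ0 : ∀ x ∈ ball 0 1, 0 ≤ Q x) (hs : 0 < s)
    (hx₀ : x₀ ∈ frontier (posSet u) ∩ ball 0 1) (hsub : closedBall z s ⊆ ball 0 1)
    (hzero : ∀ x ∈ ball z s, u x = 0) (htouch : x₀ ∈ sphere z s)
    (ha : ∀ᶠ x in 𝓝 x₀, u x ≤ a * infDist x (ball z s)) : Q x₀ ≤ a := by
  by_contra! haQ
  have hball := isOpen_ball.mem_nhds hx₀.2
  have hclosure := mem_closure_ball_of_mem_sphere hs htouch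
  obtain ⟨q, haq, hqQ⟩ := exists_between haQ
  obtain ⟨ζ, hζ, hζ0, hζu⟩ := exists_isTestFunction_integral_mul_lap_pos (by lia) isOpen_ball
    hu.contOn hu.nonneg hs hsub hzero htouch hx₀.1.1
  obtain ⟨ℓ, ⟨hℓ, hℓa⟩, hsharp⟩ := hu.exists_sharp_slope hx₀ hclosure ha
  obtain ⟨r, hr, hrsub⟩ := nhds_basis_closedBall.mem_iff.1 hball
  obtain ⟨L, hL⟩ := hu.locLip _ (isCompact_closedBall x₀ r) hrsub
  obtain ⟨lam, hlam, hlam1, hLlam⟩ := exists_pos_lt_one_mul_lt L hℓ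
  obtain ⟨G, hG, hGle⟩ := exists_mul_pow_le_integral_barrier hm hlam.ne'
  have hbound : ∀ᶠ σ in 𝓝[>] 0, (q - ℓ - σ) * G ≤ IsNearOptimal.errorConst m ℓ L * √σ := by
    filter_upwards [eventually_nhdsGT_small (hℓa.trans_lt haq) hLlam hlam.ne',
      self_mem_nhdsWithin] with σ ⟨hσ1, hσq, hσL, hσlam⟩ hσ
    refine mul_le_errorConst_mul_sqrt hm hu hf0 hQ0
      (fun η ↦ hu.integrableOn_mul hf0 hQ hQ0 hζ hζ0 hζu) hclosure hzero hℓ.le hlam.le hlam1.le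
      hσL hσ hσ1.le hσq.le ?_ (F := f x₀ + 1) (by linarith [hf0 x₀ hx₀.2]) ?_
      (fun b y h hh ↦ hGle b y hh hσ hσlam.le)
      (frequently_isNearOptimal hx₀.2 hs hclosure hσ (closedBall_mem_nhds x₀ hr) hL
        (hsharp σ hσ).1 (hsharp σ hσ).2)
    · exact ((hQ.continuousAt hball).eventually_const_lt hqQ).mono fun _ ↦ le_of_lt
    · exact ((hf.continuousAt hball).eventually_lt_const (lt_add_one _)).mono fun _ ↦ le_of_lt
  have hlim : (q - ℓ - 0) * G ≤ IsNearOptimal.errorConst m ℓ L * √0 := le_of_tendsto_of_tendsto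
    ((by fun_prop : Continuous fun σ ↦ (q - ℓ - σ) * G).continuousWithinAt)
    ((by fun_prop : Continuous fun σ ↦ IsNearOptimal.errorConst m ℓ L * √σ).continuousWithinAt)
    hbound
  rw [Real.sqrt_zero, mul_zero, sub_zero] at hlim
  exact hlim.not_gt (mul_pos (by linarith) hG)

end SharpSlope

lemma exists_touching_ball_subset {E : Type*} [NormedAddCommGroup E] [NormedSpace ℝ E] {x z : E}
    {s : ℝ} (hs : 0 < s) (htouch : x ∈ sphere z s) {U : Set E} (hU : U ∈ 𝓝 x) :
    ∃ z' s', 0 < s' ∧ x ∈ sphere z' s' ∧ closedBall z' s' ⊆ U ∧ ball z' s' ⊆ ball z s := by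
  obtain ⟨r, hr, hrU⟩ := nhds_basis_closedBall.mem_iff.1 hU
  set t := min 1 (r / (2 * s))
  have ht : 0 < t := by positivity
  have ht1 : t ≤ 1 := min_le_left _ _
  have htr : 2 * (t * s) ≤ r := by
    have := (le_div_iff₀ (by positivity)).1 (min_le_right 1 (r / (2 * s)))
    linarith
  rw [mem_sphere_iff_norm] at htouch
  have hx : dist x (x + t • (z - x)) = t * s := by
    rw [dist_self_add_right, norm_smul, norm_sub_rev, htouch, Real.norm_of_nonneg ht.le]
  refine ⟨x + t • (z - x), t * s, by positivity, hx,
    (closedBall_subset_closedBall' ?_).trans hrU, ball_subset_ball' ?_⟩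
  · rw [dist_comm, hx]
    linarith
  · rw [dist_eq_norm, show x + t • (z - x) - z = (1 - t) • (x - z) by module, norm_smul, htouch,
      Real.norm_of_nonneg (sub_nonneg.2 ht1)]
    linarith

theorem nondegeneracy_at_touching_ball_general (hn : 2 ≤ n) {f Q u : EuclideanSpace ℝ (Fin n) → ℝ}
    (hf : ContinuousOn f (ball 0 1)) (hf0 : ∀ x ∈ ball 0 1, 0 ≤ f x)
    (hQ : ContinuousOn Q (ball 0 1)) (hQ0 : ∀ x ∈ ball 0 1, 0 ≤ Q x) (hu : IsWeakSolution f Q u)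
    {x₀ z : EuclideanSpace ℝ (Fin n)} {s : ℝ} (hs : 0 < s)
    (hx₀ : x₀ ∈ frontier (posSet u) ∩ ball 0 1) (hzero : ∀ x ∈ ball z s ∩ ball 0 1, u x = 0)
    (htouch : x₀ ∈ sphere z s) {ε ρ : ℝ} (hε : 0 < ε) (hρ : 0 < ρ) :
    ∃ x ∈ ball x₀ ρ, x ∈ posSet u ∧ (Q x₀ - ε) * infDist x (ball z s) ≤ u x := by
  obtain ⟨m, rfl⟩ : ∃ m, n = m + 1 := ⟨n - 1, by lia⟩
  by_contra! hno
  have hball := isOpen_ball.mem_nhds hx₀.2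
  have hslope : 0 ≤ Q x₀ - ε := by
    by_contra! hneg
    obtain ⟨x, hx, hxx₀⟩ := Metric.mem_closure_iff.1 hx₀.1.1 ρ hρ
    exact (hno x (mem_ball'.2 hxx₀) hx).not_ge <|
      (mul_nonpos_of_nonpos_of_nonneg hneg.le infDist_nonneg).trans hx.2.le
  obtain ⟨z', s', hs', htouch', hsub, hss'⟩ := exists_touching_ball_subset hs htouch hball
  refine (sub_lt_self (Q x₀) hε).not_ge <| hu.le_of_eventually_le_mul_infDist_ball (by lia) hf hf0
    hQ hQ0 hs' hx₀ hsub (fun x hx ↦ hzero x ⟨hss' hx, hsub (ball_subset_closedBall hx)⟩) htouch' ?_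
  filter_upwards [hball, ball_mem_nhds x₀ hρ] with x hx1 hxρ
  by_cases hx : x ∈ posSet u
  · exact (hno x hxρ hx).le.trans <|
      mul_le_mul_of_nonneg_left (infDist_le_infDist_of_subset hss' (nonempty_ball.2 hs')) hslope
  · exact (not_lt.1 fun h ↦ hx ⟨hx1, h⟩).trans (mul_nonneg hslope infDist_nonneg)

/-- **Proposition 3.2.** If a ball `B = B_s(z)` contained in the zero set of a weak solution `u`
touches the free boundary at `x₀`, then `limsup_{x → x₀, u(x) > 0} u(x)/dist(x,B) ≥ Q(x₀)`. -/
theorem nondegeneracy_at_touching_ball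
    (hn : 2 ≤ n) (f Q u : EuclideanSpace ℝ (Fin n) → ℝ) (Qmin Qmax : ℝ)
    (hf : ContDiffOn ℝ (⊤ : ℕ∞) f (ball 0 1))
    (hf0 : ∀ x ∈ ball (0 : EuclideanSpace ℝ (Fin n)) 1, 0 ≤ f x)
    (hQ : ContDiffOn ℝ (⊤ : ℕ∞) Q (ball 0 1)) (hQmin : 0 < Qmin)
    (hQb : ∀ x ∈ ball (0 : EuclideanSpace ℝ (Fin n)) 1, Qmin ≤ Q x ∧ Q x ≤ Qmax)
    (hu : IsWeakSolution f Q u)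
    (x₀ z : EuclideanSpace ℝ (Fin n)) (s : ℝ) (hs : 0 < s)
    (hx₀ : x₀ ∈ frontier (posSet u) ∩ ball (0 : EuclideanSpace ℝ (Fin n)) 1)
    (hB : ball z s ⊆ ball (0 : EuclideanSpace ℝ (Fin n)) 1)
    (hBzero : ∀ x ∈ ball z s, u x = 0)
    (htouch : x₀ ∈ sphere z s) :
    ∀ ε : ℝ, 0 < ε → ∀ ρ : ℝ, 0 < ρ →
      ∃ x ∈ ball x₀ ρ, x ∈ posSet u ∧
        (Q x₀ - ε) * Metric.infDist x (ball z s) ≤ u x := by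
  intro ε hε ρ hρ
  exact nondegeneracy_at_touching_ball_general hn hf.continuousOn hf0 hQ.continuousOn
    (fun x hx ↦ hQmin.le.trans (hQb x hx).1) hu hs hx₀ (fun x hx ↦ hBzero x hx.1) htouch hε hρ
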